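/- Let p, q, s be distinct primes with p ≡ 5 (mod 8), q ≡ 3 (mod 8), s ≡ 3 (mod 4), (p/q) = (p/s) = 1. Then the 2-Sylow subgroups of the ideal class groups of ℚ(√(pq), √s) and ℚ(√(ps), √q) are cyclic of order h₂(pqs). -/

import Mathlib

open NumberField

/-- The biquadratic field `ℚ(√a, √b)`, realized inside `ℂ`. -/
noncomputable def biquadF (a b : ℕ) : IntermediateField ℚ ℂ :=
  IntermediateField.adjoin ℚ {((Real.sqrt a : ℝ) : ℂ), ((Real.sqrt b : ℝ) : ℂ)}

/-- The real quadratic field `ℚ(√d)`, realized inside `ℂ`. -/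
noncomputable def quadF (d : ℕ) : IntermediateField ℚ ℂ :=
  IntermediateField.adjoin ℚ {((Real.sqrt d : ℝ) : ℂ)}

/-!
Let `k = ℚ(√(pqs))`, `F = ℚ(√s)`, `F' = ℚ(√(pq))` and `L = ℚ(√s, √(pq))`. On class groups the
extension `j` from `k` to `L` and the norm `N` from `L` to `k` satisfy `N (j c) = c²` and
`j (N a) = a * σ a`, where `σ` generates the Galois group of `L / k`.

The class number of `F` is odd. In `F'` the classes of order two are represented by ideals `J`
with `J² = (r)`, `r ∣ 2pq`; no class has order four, and all these classes capitulate in `L`,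
where `2`, `p` and `q` are squares up to units. Since `σ` is the product of the conjugations of
`L` over `F` and over `F'`, it follows that `σ` fixes every `2`-primary class of `L`. The field
`k` has at most one class of order two, and this class capitulates in `L` as well.

For an ideal `I` of `L` in a `σ`-invariant class, `x σ(I) = y I` with `N (y / x) = ±1`, since
units of `k` are norms of units of `L` up to sign. When `N (y / x) = 1`, Hilbert 90 makes the
class that of an ambiguous ideal, and only primes above `2` can ramify in `L / k`. If `2` is inert
in `k`, such a class lies in the image of `j`, and the product of two classes with
`N (y / x) = -1` has one with `N (y / x) = 1`. If `2` splits, then `pqs ≡ 1 (mod 8)` and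
`N (y / x) = -1` is impossible because `X² + Y² = s (Z² + W²)` has no nontrivial solution over
`ℚ₂`; the primes above `2` contribute at most one class outside the image of `j`, modulo that
image. In either case the image of `j` has index at most two, as far as `2`-primary classes are
concerned.

By Dirichlet's theorem there is a prime number modulo which `s` and `pq` are squares but which is
not a square modulo `p`. A prime of `L` above it has a class whose norm is not a square in the
class group of `k`. Comparing cardinalities, `N` is an isomorphism from the `2`-part of the class
group of `L` onto that of `k`, which is cyclic. The second field arises by exchanging `q` and `s`.
-/

open scoped nonZeroDivisors

/-! ### Ideal classes -/

theorem span_singleton_ne_zero {R : Type*} [CommSemiring R] {x : R} (hx : x ≠ 0) :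
    Ideal.span {x} ≠ 0 :=
  Ideal.span_singleton_eq_bot.not.mpr hx

section IdealClass

variable {R : Type*} [CommRing R] [IsDedekindDomain R]

open Classical in
/-- The class of an integral ideal in the class group, as a total function on ideals; the zero
ideal, which has no class, is given the value `1`. -/
noncomputable def idealClass (I : Ideal R) : ClassGroup R :=
  if h : I ∈ (Ideal R)⁰ then ClassGroup.mk0 ⟨I, h⟩ else 1

theorem idealClass_coe (I : (Ideal R)⁰) : idealClass (I : Ideal R) = ClassGroup.mk0 I :=
  dif_pos I.2

theorem idealClass_mul {I J : Ideal R} (hI : I ≠ 0) (hJ : J ≠ 0) :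
    idealClass (I * J) = idealClass I * idealClass J := by
  lift I to (Ideal R)⁰ using mem_nonZeroDivisors_of_ne_zero hI
  lift J to (Ideal R)⁰ using mem_nonZeroDivisors_of_ne_zero hJ
  rw [← Submonoid.coe_mul, idealClass_coe, idealClass_coe, idealClass_coe, map_mul]

theorem idealClass_pow {I : Ideal R} (hI : I ≠ 0) (n : ℕ) :
    idealClass (I ^ n) = idealClass I ^ n := by
  lift I to (Ideal R)⁰ using mem_nonZeroDivisors_of_ne_zero hI
  rw [← SubmonoidClass.coe_pow, idealClass_coe, idealClass_coe, map_pow]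

theorem exists_idealClass_eq (y : ClassGroup R) : ∃ I : Ideal R, I ≠ 0 ∧ idealClass I = y := by
  obtain ⟨I, rfl⟩ := ClassGroup.mk0_surjective y
  exact ⟨I, nonZeroDivisors.ne_zero I.2, idealClass_coe I⟩

theorem idealClass_span_singleton (x : R) : idealClass (Ideal.span {x}) = 1 := by
  by_cases hx : Ideal.span {x} ∈ (Ideal R)⁰
  · rw [idealClass, dif_pos hx, ClassGroup.mk0_eq_one_iff]
    exact ⟨⟨x, rfl⟩⟩
  · exact dif_neg hx

theorem exists_eq_span_singleton_of_idealClass_eq_one {I : Ideal R} (hI : I ≠ 0)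
    (h : idealClass I = 1) : ∃ x, x ≠ 0 ∧ I = Ideal.span {x} := by
  lift I to (Ideal R)⁰ using mem_nonZeroDivisors_of_ne_zero hI
  rw [idealClass_coe, ClassGroup.mk0_eq_one_iff] at h
  obtain ⟨x, hx⟩ := h.principal
  exact ⟨x, fun h0 ↦ hI (by rw [hx, h0]; simp), hx⟩

theorem exists_span_singleton_mul_eq {I J : Ideal R} (hI : I ≠ 0) (hJ : J ≠ 0)
    (h : idealClass I = idealClass J) :
    ∃ x y, x ≠ 0 ∧ y ≠ 0 ∧ Ideal.span {x} * I = Ideal.span {y} * J := by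
  lift I to (Ideal R)⁰ using mem_nonZeroDivisors_of_ne_zero hI
  lift J to (Ideal R)⁰ using mem_nonZeroDivisors_of_ne_zero hJ
  rw [idealClass_coe, idealClass_coe, ClassGroup.mk0_eq_mk0_iff] at h
  obtain ⟨x, y, hx, hy, e⟩ := h
  exact ⟨x, y, hx, hy, e⟩

theorem idealClass_span_singleton_mul {x : R} (hx : x ≠ 0) {I : Ideal R} (hI : I ≠ 0) :
    idealClass (Ideal.span {x} * I) = idealClass I := by
  rw [idealClass_mul (span_singleton_ne_zero hx) hI, idealClass_span_singleton, one_mul]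

theorem exists_idealClass_eq_of_sq_eq_span_singleton {I : Ideal R} {x z r b : R} (hb : b ≠ 0)
    (hr : r ≠ 0) (hI : I ≠ 0) (hx : I ^ 2 = Ideal.span {x}) (hz : z ^ 2 = x * r * b ^ 2) :
    ∃ J : Ideal R, J ≠ 0 ∧ idealClass J = idealClass I ∧ J ^ 2 = Ideal.span {r} := by
  have hIb : I * Ideal.span {b} ≠ 0 := mul_ne_zero hI (span_singleton_ne_zero hb)
  have hsq : Ideal.span {z} ^ 2 = (I * Ideal.span {b}) ^ 2 * Ideal.span {r} := by
    rw [mul_pow, hx, Ideal.span_singleton_pow, hz, Ideal.span_singleton_pow,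
      Ideal.span_singleton_mul_span_singleton, Ideal.span_singleton_mul_span_singleton]
    congr 2
    ring
  obtain ⟨J, hJ⟩ := (UniqueFactorizationMonoid.pow_dvd_pow_iff_dvd two_ne_zero).mp ⟨_, hsq⟩
  have hJr : J ^ 2 = Ideal.span {r} := by
    rw [hJ, mul_pow] at hsq
    exact mul_left_cancel₀ (pow_ne_zero 2 hIb) hsq
  have hJ0 : J ≠ 0 := (pow_ne_zero_iff two_ne_zero).mp (hJr ▸ span_singleton_ne_zero hr)
  have hIJ : idealClass I * idealClass J = 1 := by
    rw [← idealClass_span_singleton z, hJ, idealClass_mul hIb hJ0,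
      idealClass_mul hI (span_singleton_ne_zero hb), idealClass_span_singleton, mul_one]
  have hJJ : idealClass J * idealClass J = 1 := by
    rw [← idealClass_mul hJ0 hJ0, ← pow_two, hJr, idealClass_span_singleton]
  exact ⟨J, hJ0, mul_right_cancel (hJJ.trans hIJ.symm), hJr⟩

end IdealClass

section IsSquareUpTo

/-- `x` is a square up to multiplication by a unit from the subgroup `U`. -/
def IsSquareUpTo {R : Type*} [CommRing R] (U : Subgroup Rˣ) (x : R) : Prop :=
  ∃ u ∈ U, ∃ z, z ^ 2 = u * x

namespace IsSquareUpTo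

variable {R S : Type*} [CommRing R] [CommRing S] {U : Subgroup Rˣ} {V : Subgroup Sˣ} {x y z : R}

theorem of_sq_eq (h : z ^ 2 = x) : IsSquareUpTo U x :=
  ⟨1, U.one_mem, z, by rw [h, Units.val_one, one_mul]⟩

theorem mul (hx : IsSquareUpTo U x) (hy : IsSquareUpTo U y) : IsSquareUpTo U (x * y) := by
  obtain ⟨u, hu, z, hz⟩ := hx
  obtain ⟨v, hv, w, hw⟩ := hy
  exact ⟨u * v, U.mul_mem hu hv, z * w, by rw [mul_pow, hz, hw, Units.val_mul]; ring⟩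

theorem map (f : R →+* S) (hf : U.map (Units.map f) ≤ V) (h : IsSquareUpTo U x) :
    IsSquareUpTo V (f x) := by
  obtain ⟨u, hu, z, hz⟩ := h
  exact ⟨Units.map f u, hf (Subgroup.mem_map_of_mem _ hu), f z, by
    rw [← map_pow, hz, map_mul]; rfl⟩

theorem of_mul_right [IsDomain R] [IsIntegrallyClosed R] (hy0 : y ≠ 0)
    (hxy : IsSquareUpTo U (x * y)) (hy : IsSquareUpTo U y) : IsSquareUpTo U x := by
  obtain ⟨u, hu, z, hz⟩ := hxy.mul hy
  have hyz : y ^ 2 ∣ z ^ 2 := ⟨u * x, by rw [hz]; ring⟩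
  obtain ⟨w, rfl⟩ := (IsIntegrallyClosed.pow_dvd_pow_iff two_ne_zero).mp hyz
  refine ⟨u, hu, w, mul_left_cancel₀ (pow_ne_zero 2 hy0) ?_⟩
  rw [← mul_pow, hz]
  ring

theorem exists_span_singleton_sq_eq [IsDomain R] (hx : IsSquareUpTo U x) :
    ∃ z : R, Ideal.span {z} ^ 2 = Ideal.span {x} := by
  obtain ⟨u, -, z, hz⟩ := hx
  refine ⟨z, ?_⟩
  rw [Ideal.span_singleton_pow, hz, Ideal.span_singleton_eq_span_singleton]
  exact associated_unit_mul_left x _ u.isUnit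

theorem idealClass_eq_one [IsDedekindDomain R] {J : Ideal R} (hJ : J ^ 2 = Ideal.span {x})
    (hx : IsSquareUpTo U x) : idealClass J = 1 := by
  obtain ⟨z, hz⟩ := hx.exists_span_singleton_sq_eq
  rw [pow_left_injective two_ne_zero (hJ.trans hz.symm), idealClass_span_singleton]

end IsSquareUpTo

end IsSquareUpTo

/-! ### Quadratic extensions of integrally closed domains -/

/-- `σ` is the nontrivial automorphism of a quadratic extension of rings `B / A`. -/
structure IsQuadraticConj {A B : Type*} [CommRing A] [IsDomain A] [IsIntegrallyClosed A]
    [CommRing B] [IsDomain B] [IsIntegrallyClosed B] [Algebra A B] [Module.Finite A B]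
    [Module.IsTorsionFree A B] (σ : B ≃ₐ[A] B) : Prop where
  finrank_eq_two : Module.finrank A B = 2
  apply_apply (x : B) : σ (σ x) = x
  algebraMap_intNorm (x : B) : algebraMap A B (Algebra.intNorm A B x) = x * σ x
  exists_algebraMap_eq (x : B) : σ x = x → ∃ a, algebraMap A B a = x

theorem exists_algEquiv_of_finrank_eq_two (K L : Type*) [Field K] [Field L] [Algebra K L]
    [Algebra.IsSeparable K L] (h2 : Module.finrank K L = 2) :
    ∃ σ : L ≃ₐ[K] L, (∀ x, σ (σ x) = x) ∧ (∀ x, algebraMap K L (Algebra.norm K x) = x * σ x) ∧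
      ∀ x, σ x = x → ∃ y, algebraMap K L y = x := by
  have : Algebra.IsQuadraticExtension K L := ⟨h2⟩
  obtain ⟨σ, hσ, huniq⟩ := (Nat.card_eq_two_iff' (1 : Gal(L/K))).mp <| by
    rw [IsGalois.card_aut_eq_finrank, h2]
  have hall (g : Gal(L/K)) : g = 1 ∨ g = σ := or_iff_not_imp_left.mpr (huniq g)
  have hσσ : σ * σ = 1 := (hall _).resolve_right fun h ↦ hσ (by simpa using h)
  refine ⟨σ, DFunLike.congr_fun hσσ, fun x ↦ ?_, fun x hx ↦ ?_⟩
  · classical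
    have huniv : (Finset.univ : Finset Gal(L/K)) = {1, σ} := by
      ext g
      simpa using hall g
    rw [Algebra.norm_eq_prod_automorphisms, huniv, Finset.prod_pair hσ.symm, AlgEquiv.one_apply]
  · refine IntermediateField.mem_bot.mp ((IsGalois.mem_bot_iff_fixed x).mpr fun g ↦ ?_)
    rcases hall g with rfl | rfl
    · rfl
    · exact hx

theorem exists_isQuadraticConj (A K L B : Type*) [CommRing A] [IsDomain A] [IsIntegrallyClosed A]
    [CommRing B] [IsDomain B] [IsIntegrallyClosed B] [Field K] [Field L] [Algebra A K]
    [IsFractionRing A K] [Algebra B L] [IsFractionRing B L] [Algebra A B] [Algebra K L]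
    [Algebra A L] [IsScalarTower A K L] [IsScalarTower A B L] [IsIntegralClosure B A L]
    [Module.Finite A B] [Module.IsTorsionFree A B] [Algebra.IsSeparable K L]
    (h2 : Module.finrank K L = 2) : ∃ σ : B ≃ₐ[A] B, IsQuadraticConj σ := by
  obtain ⟨σ, hσσ, hnorm, hfix⟩ := exists_algEquiv_of_finrank_eq_two K L h2
  have : FiniteDimensional K L := Module.finite_of_finrank_eq_succ h2
  have hB : Function.Injective (algebraMap B L) := IsFractionRing.injective B L
  have hmap (x : B) : algebraMap B L (galRestrict A K L B σ x) = σ (algebraMap B L x) :=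
    algebraMap_galRestrict_apply A σ x
  refine ⟨galRestrict A K L B σ, ⟨?_, fun x ↦ hB ?_, fun x ↦ hB ?_, fun x hx ↦ ?_⟩⟩
  · rw [← h2, IsFractionRing.finrank_eq A K B L]
  · rw [hmap, hmap, hσσ]
  · rw [map_mul, hmap, ← hnorm, ← IsScalarTower.algebraMap_apply,
      IsScalarTower.algebraMap_apply A K L, Algebra.algebraMap_intNorm (L := L)]
  · obtain ⟨y, hy⟩ := hfix _ (by rw [← hmap, hx])
    have hint : IsIntegral A (algebraMap K L y) :=
      hy ▸ (IsIntegralClosure.isIntegral_iff (A := B)).mpr ⟨x, rfl⟩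
    obtain ⟨a, rfl⟩ := IsIntegrallyClosed.isIntegral_iff.mp
      ((isIntegral_algebraMap_iff (algebraMap K L).injective).mp hint)
    exact ⟨a, hB (by rw [← hy, ← IsScalarTower.algebraMap_apply,
      ← IsScalarTower.algebraMap_apply])⟩

namespace IsQuadraticConj

variable {A B : Type*} [CommRing A] [IsDedekindDomain A] [CommRing B] [IsDedekindDomain B]
  [Algebra A B] [Module.Finite A B] [Module.IsTorsionFree A B] {σ : B ≃ₐ[A] B}

theorem exists_add_conj_eq (hσ : IsQuadraticConj σ) (x : B) : ∃ a, algebraMap A B a = x + σ x :=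
  hσ.exists_algebraMap_eq _ <| by rw [map_add, hσ.apply_apply, add_comm]

theorem relNorm_map_algebraMap (hσ : IsQuadraticConj σ) (I : Ideal A) :
    Ideal.relNorm A (I.map (algebraMap A B)) = I ^ 2 := by
  rw [Ideal.relNorm_algebraMap, hσ.finrank_eq_two]

theorem dvd_of_map_algebraMap_dvd (hσ : IsQuadraticConj σ) {I J : Ideal A}
    (h : I.map (algebraMap A B) ∣ J.map (algebraMap A B)) : I ∣ J := by
  have hdvd := map_dvd (Ideal.relNorm A) h
  rw [hσ.relNorm_map_algebraMap, hσ.relNorm_map_algebraMap] at hdvd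
  exact (UniqueFactorizationMonoid.pow_dvd_pow_iff_dvd two_ne_zero).mp hdvd

theorem mul_map_eq_map_relNorm (hσ : IsQuadraticConj σ) (I : Ideal B) :
    I * I.map σ = (Ideal.relNorm A I).map (algebraMap A B) := by
  have hnorm : Ideal.relNorm A (I * I.map σ) = Ideal.relNorm A I ^ 2 := by
    rw [map_mul, Ideal.relNorm_map_algEquiv, pow_two]
  obtain rfl | hI := eq_or_ne I ⊥
  · simp
  obtain ⟨C, hC⟩ : I * I.map σ ∣ (Ideal.relNorm A I).map (algebraMap A B) := by
    rw [Ideal.dvd_iff_le, Ideal.map_relNorm, Ideal.span_le]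
    rintro _ ⟨x, hx, rfl⟩
    rw [Function.comp_apply, hσ.algebraMap_intNorm]
    exact Ideal.mul_mem_mul hx (Ideal.mem_map_of_mem σ hx)
  have hC1 : Ideal.relNorm A C = 1 := by
    have := congrArg (Ideal.relNorm A) hC
    rw [hσ.relNorm_map_algebraMap, map_mul, hnorm] at this
    exact mul_eq_left₀ (pow_ne_zero 2 (Ideal.relNorm_eq_bot_iff.not.mpr hI)) |>.mp this.symm
  have hCtop : C = ⊤ := by
    have := Ideal.relNorm_le_comap A C
    rwa [hC1, Ideal.one_eq_top, top_le_iff, Ideal.comap_eq_top_iff] at this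
  rw [hC, hCtop, Ideal.mul_top]

end IsQuadraticConj

theorem extendedHom_idealClass {A : Type*} (B : Type*) [CommRing A] [IsDedekindDomain A]
    [CommRing B] [IsDedekindDomain B] [Algebra A B] [Module.IsTorsionFree A B] {I : Ideal A}
    (hI : I ≠ 0) :
    ClassGroup.extendedHom A B (idealClass I) = idealClass (I.map (algebraMap A B)) := by
  lift I to (Ideal A)⁰ using mem_nonZeroDivisors_of_ne_zero hI
  rw [idealClass_coe, ClassGroup.extendedHom_mk0, ← idealClass_coe]

section NormClass

variable (A : Type*) {B : Type*} [CommRing A] [IsDedekindDomain A] [CommRing B]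
  [IsDedekindDomain B] [Algebra A B] [Module.Finite A B] [Module.IsTorsionFree A B]

theorem idealClass_relNorm_eq {I J : Ideal B} (hI : I ≠ 0) (hJ : J ≠ 0)
    (h : idealClass I = idealClass J) :
    idealClass (Ideal.relNorm A I) = idealClass (Ideal.relNorm A J) := by
  obtain ⟨x, y, hx, hy, hxy⟩ := exists_span_singleton_mul_eq hI hJ h
  have hnorm := congrArg (Ideal.relNorm A) hxy
  rw [map_mul, map_mul, Ideal.relNorm_singleton, Ideal.relNorm_singleton] at hnorm
  rw [← idealClass_span_singleton_mul (Algebra.intNorm_ne_zero.mpr hx)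
    (Ideal.relNorm_eq_bot_iff.not.mpr hI), hnorm,
    idealClass_span_singleton_mul (Algebra.intNorm_ne_zero.mpr hy)
    (Ideal.relNorm_eq_bot_iff.not.mpr hJ)]

/-- The norm homomorphism on class groups induced by the relative norm of ideals. -/
noncomputable def normClass : ClassGroup B →* ClassGroup A :=
  .mk' (fun y ↦ idealClass (Ideal.relNorm A (exists_idealClass_eq y).choose)) fun y z ↦ by
    have hy := (exists_idealClass_eq y).choose_spec
    have hz := (exists_idealClass_eq z).choose_spec
    rw [← idealClass_mul (Ideal.relNorm_eq_bot_iff.not.mpr hy.1)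
      (Ideal.relNorm_eq_bot_iff.not.mpr hz.1), ← map_mul]
    have hyz := (exists_idealClass_eq (y * z)).choose_spec
    exact idealClass_relNorm_eq A hyz.1 (mul_ne_zero hy.1 hz.1) <| by
      rw [hyz.2, idealClass_mul hy.1 hz.1, hy.2, hz.2]

theorem normClass_idealClass {I : Ideal B} (hI : I ≠ 0) :
    normClass A (idealClass I) = idealClass (Ideal.relNorm A I) :=
  have hrep := (exists_idealClass_eq (idealClass I)).choose_spec
  idealClass_relNorm_eq A hrep.1 hI hrep.2

variable {A}

theorem IsQuadraticConj.normClass_extendedHom {σ : B ≃ₐ[A] B} (hσ : IsQuadraticConj σ)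
    (y : ClassGroup A) : normClass A (ClassGroup.extendedHom A B y) = y ^ 2 := by
  obtain ⟨I, hI, rfl⟩ := exists_idealClass_eq y
  rw [extendedHom_idealClass B hI, normClass_idealClass A (Ideal.map_ne_bot_of_ne_bot hI),
    hσ.relNorm_map_algebraMap, idealClass_pow hI]

theorem IsQuadraticConj.idealClass_mul_idealClass_map {σ : B ≃ₐ[A] B} (hσ : IsQuadraticConj σ)
    {I : Ideal B} (hI : I ≠ 0) : idealClass I * idealClass (I.map σ) =
      ClassGroup.extendedHom A B (normClass A (idealClass I)) := by
  rw [normClass_idealClass A hI, extendedHom_idealClass B (Ideal.relNorm_eq_bot_iff.not.mpr hI),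
    ← hσ.mul_map_eq_map_relNorm,
    idealClass_mul hI ((Ideal.map_eq_bot_iff_of_injective σ.injective).not.mpr hI)]

end NormClass

/-! ### Ambiguous ideal classes -/

theorem exists_eq_sq_mul_squarefree {M : Type*} [CommMonoidWithZero M]
    [UniqueFactorizationMonoid M] {a : M} (ha : a ≠ 0) :
    ∃ b c, b ≠ 0 ∧ Squarefree c ∧ a = b ^ 2 * c := by
  have : Nontrivial M := ⟨a, 0, ha⟩
  induction a using WfDvdMonoid.induction_on_irreducible with
  | zero => exact absurd rfl ha
  | unit u hu => exact ⟨1, u, one_ne_zero, hu.squarefree, by rw [one_pow, one_mul]⟩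
  | mul a i ha0 hi ih =>
    obtain ⟨b, c, hb, hc, rfl⟩ := ih ha0
    by_cases hic : i ∣ c
    · obtain ⟨e, rfl⟩ := hic
      exact ⟨b * i, e, mul_ne_zero hb hi.ne_zero, hc.of_mul_right, by
        rw [mul_pow, pow_two i]; ac_rfl⟩
    · refine ⟨b, i * c, hb, ?_, by ac_rfl⟩
      exact squarefree_mul_iff.mpr
        ⟨hi.isRelPrime_iff_not_dvd.mpr hic, hi.squarefree, hc⟩

theorem exists_sub_algebraMap_mem_of_card_eq {A B : Type*} [CommRing A] [CommRing B] [Algebra A B]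
    {J : Ideal B} [Finite (B ⧸ J)]
    (hcard : Nat.card (A ⧸ J.comap (algebraMap A B)) = Nat.card (B ⧸ J)) (w : B) :
    ∃ a : A, w - algebraMap A B a ∈ J := by
  let f := Ideal.quotientMap J (algebraMap A B) le_rfl
  have hf : Function.Bijective f :=
    (Nat.bijective_iff_injective_and_card f).mpr ⟨Ideal.quotientMap_injective, hcard⟩
  obtain ⟨a, ha⟩ := hf.surjective (Ideal.Quotient.mk J w)
  obtain ⟨a, rfl⟩ := Ideal.Quotient.mk_surjective a
  exact ⟨a, Ideal.Quotient.eq.mp (ha.symm.trans Ideal.quotientMap_mk)⟩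

theorem eq_of_dvd_of_absNorm_eq {A : Type*} [CommRing A] [IsDedekindDomain A] [Module.Free ℤ A]
    {I J : Ideal A} (hJ : Ideal.absNorm J ≠ 0) (h : I ∣ J)
    (hn : Ideal.absNorm I = Ideal.absNorm J) : I = J := by
  obtain ⟨C, rfl⟩ := h
  have hC : Ideal.absNorm C = 1 := by
    rw [map_mul] at hn hJ
    exact (mul_eq_left₀ (left_ne_zero_of_mul hJ)).mp hn.symm
  rw [Ideal.absNorm_eq_one_iff.mp hC, Ideal.mul_top]

theorem map_algEquiv_eq_of_sq_eq_map {A B : Type*} [CommRing A] [CommRing B] [IsDedekindDomain B]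
    [Algebra A B] (σ : B ≃ₐ[A] B) {C : Ideal A} {J : Ideal B}
    (hJ : J ^ 2 = C.map (algebraMap A B)) : J.map σ = J := by
  apply pow_left_injective two_ne_zero
  change J.map σ ^ 2 = J ^ 2
  rw [← Ideal.map_pow, hJ]
  refine (Ideal.map_map (algebraMap A B) (σ : B →+* B)).trans ?_
  congr 1
  ext x
  exact σ.commutes x

section NormTwo

variable {A B : Type*} [CommRing A] [IsDedekindDomain A] [Module.Free ℤ A] [Module.Finite ℤ A]

theorem absNorm_span_two (h2 : Module.finrank ℤ A = 2) :
    Ideal.absNorm (Ideal.span {(2 : A)}) = 2 ^ 2 := by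
  simpa only [Nat.cast_ofNat, h2] using Ideal.absNorm_span_natCast (S := A) 2

variable [CommRing B] [IsDedekindDomain B] [Algebra A B] {U : Subgroup Bˣ}

theorem idealClass_eq_one_of_dvd_span_two (h2 : Module.finrank ℤ A = 2)
    (htwo : IsSquareUpTo U (2 : B)) {C : Ideal A} {J : Ideal B} (hC : C ∣ Ideal.span {2})
    (hJ : J ^ 2 = C.map (algebraMap A B)) (hne : Ideal.absNorm C ≠ 2) : idealClass J = 1 := by
  have hdvd := map_dvd Ideal.absNorm hC
  rw [absNorm_span_two h2] at hdvd
  obtain ⟨k, hk, hCk⟩ := (Nat.dvd_prime_pow Nat.prime_two).mp hdvd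
  interval_cases k
  · rw [Ideal.absNorm_eq_one_iff.mp hCk, Ideal.map_top, ← Ideal.span_singleton_one] at hJ
    exact (IsSquareUpTo.of_sq_eq (U := U) (one_pow 2)).idealClass_eq_one hJ
  · exact absurd hCk hne
  · rw [eq_of_dvd_of_absNorm_eq (by rw [absNorm_span_two h2]; norm_num) hC
      (by rw [hCk, absNorm_span_two h2]), Ideal.map_span, Set.image_singleton, map_ofNat] at hJ
    exact htwo.idealClass_eq_one hJ

theorem idealClass_mul_mem_range_extendedHom [Module.IsTorsionFree A B]
    (h2 : Module.finrank ℤ A = 2)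
    (htwo : IsSquareUpTo U (2 : B)) {C C' : Ideal A} {J J' : Ideal B} (hC : C ∣ Ideal.span {2})
    (hC' : C' ∣ Ideal.span {2}) (hJ : J ^ 2 = C.map (algebraMap A B))
    (hJ' : J' ^ 2 = C'.map (algebraMap A B)) (hn : Ideal.absNorm C = 2)
    (hn' : Ideal.absNorm C' = 2) :
    idealClass J * idealClass J' ∈ (ClassGroup.extendedHom A B).range := by
  have hC0 : C ≠ 0 := by rintro rfl; simp at hn
  have hC0' : C' ≠ 0 := by rintro rfl; simp at hn'
  have hJ0 : J ≠ 0 := (pow_ne_zero_iff two_ne_zero).mp (hJ ▸ Ideal.map_ne_bot_of_ne_bot hC0)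
  have hJ0' : J' ≠ 0 := (pow_ne_zero_iff two_ne_zero).mp (hJ' ▸ Ideal.map_ne_bot_of_ne_bot hC0')
  obtain rfl | hCC := eq_or_ne C C'
  · obtain rfl : J = J' := pow_left_injective two_ne_zero (hJ.trans hJ'.symm)
    exact ⟨idealClass C, by rw [extendedHom_idealClass B hC0, ← hJ, idealClass_pow hJ0, pow_two]⟩
  · have hprime : Prime C' := Ideal.prime_of_isPrime hC0' <|
      Ideal.isPrime_of_irreducible_absNorm (hn' ▸ Nat.prime_two)
    have hdvd : C * C' ∣ Ideal.span {2} := by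
      obtain ⟨D, hD⟩ := hC
      rw [hD] at hC' ⊢
      refine mul_dvd_mul_left C <| (hprime.dvd_or_dvd hC').resolve_left fun h ↦ hCC ?_
      exact (eq_of_dvd_of_absNorm_eq (by rw [hn]; norm_num) h (by rw [hn, hn'])).symm
    have hJJ : (J * J') ^ 2 = (C * C').map (algebraMap A B) := by
      rw [mul_pow, hJ, hJ', Ideal.map_mul]
    rw [← idealClass_mul hJ0 hJ0', idealClass_eq_one_of_dvd_span_two h2 htwo hdvd hJJ
      (by rw [map_mul, hn, hn']; norm_num)]
    exact one_mem _

end NormTwo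

namespace IsQuadraticConj

variable {A B : Type*} [CommRing A] [IsDedekindDomain A] [CommRing B] [IsDedekindDomain B]
  [Algebra A B] [Module.Finite A B] [Module.IsTorsionFree A B] {σ : B ≃ₐ[A] B}

section Ramified

theorem comap_of_sq_eq_map (hσ : IsQuadraticConj σ) {C : Ideal A} {J : Ideal B}
    (hC : Squarefree C) (hJ : J ^ 2 = C.map (algebraMap A B)) :
    J.comap (algebraMap A B) = C := by
  refine le_antisymm (fun m hm ↦ ?_) fun m hm ↦ ?_
  · have hdvd : C ∣ Ideal.span {m} ^ 2 := by
      apply hσ.dvd_of_map_algebraMap_dvd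
      rw [← hJ, Ideal.map_pow, Ideal.map_span, Set.image_singleton]
      exact pow_dvd_pow_of_dvd (Ideal.dvd_span_singleton.mpr (Ideal.mem_comap.mp hm)) 2
    exact Ideal.dvd_span_singleton.mp ((hC.dvd_pow_iff_dvd two_ne_zero).mp hdvd)
  · exact Ideal.mem_comap.mpr <| Ideal.pow_le_self two_ne_zero <|
      hJ ▸ Ideal.mem_map_of_mem _ hm

theorem relNorm_of_sq_eq_map (hσ : IsQuadraticConj σ) {C : Ideal A} {J : Ideal B}
    (hJ : J ^ 2 = C.map (algebraMap A B)) : Ideal.relNorm A J = C := by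
  apply pow_left_injective two_ne_zero
  change Ideal.relNorm A J ^ 2 = C ^ 2
  rw [← map_pow, hJ, hσ.relNorm_map_algebraMap]

variable [Module.Free ℤ A] [Module.Free ℤ B] [Module.Finite ℤ B]
  [PerfectField (FractionRing A)]

/- `J` is a product of ramified primes, so `A` surjects onto `B ⧸ J` and `σ` acts trivially on
that quotient. -/
theorem sub_conj_mem_of_sq_eq_map (hσ : IsQuadraticConj σ) {C : Ideal A} {J : Ideal B}
    (hC : Squarefree C) (hJ : J ^ 2 = C.map (algebraMap A B)) (w : B) : w - σ w ∈ J := by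
  have hcard : Nat.card (A ⧸ J.comap (algebraMap A B)) = Nat.card (B ⧸ J) := by
    rw [hσ.comap_of_sq_eq_map hC hJ]
    change Ideal.absNorm C = Ideal.absNorm J
    rw [← hσ.relNorm_of_sq_eq_map hJ, Ideal.absNorm_relNorm]
  have hJ0 : J ≠ ⊥ := by
    rintro rfl
    exact hC.ne_zero (by rw [← hσ.relNorm_of_sq_eq_map hJ, Ideal.relNorm_bot, Ideal.zero_eq_bot])
  have : Finite (B ⧸ J) := Ideal.finiteQuotientOfFreeOfNeBot J hJ0
  obtain ⟨a, ha⟩ := exists_sub_algebraMap_mem_of_card_eq hcard w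
  have hσa : σ (w - algebraMap A B a) ∈ J :=
    map_algEquiv_eq_of_sq_eq_map σ hJ ▸ Ideal.mem_map_of_mem σ ha
  rw [map_sub, AlgEquiv.commutes] at hσa
  simpa using J.sub_mem ha hσa

theorem mem_of_sub_conj_sq_eq (hσ : IsQuadraticConj σ) {C : Ideal A} {J : Ideal B}
    (hC : Squarefree C) (hJ : J ^ 2 = C.map (algebraMap A B)) {w : B} {a : A}
    (ha : (w - σ w) ^ 2 = algebraMap A B a) : a ∈ C := by
  have hmem : (w - σ w) ^ 2 ∈ J ^ 2 :=
    Ideal.pow_mem_pow (hσ.sub_conj_mem_of_sq_eq_map hC hJ w) 2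
  rw [← Ideal.dvd_span_singleton] at hmem ⊢
  apply hσ.dvd_of_map_algebraMap_dvd
  rwa [Ideal.map_span, Set.image_singleton, ← ha, ← hJ]

theorem dvd_span_two_of_sq_eq_map (hσ : IsQuadraticConj σ) {φ ψ : B} {s m : A}
    (hsm : IsCoprime s m) (hφ : φ ^ 2 = algebraMap A B s) (hψ : ψ ^ 2 = algebraMap A B m)
    (hσφ : σ φ = -φ) (hσψ : σ ψ = -ψ) {C : Ideal A} {J : Ideal B} (hC : Squarefree C)
    (hJ : J ^ 2 = C.map (algebraMap A B)) : C ∣ Ideal.span {2} := by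
  have hs : 4 * s ∈ C := hσ.mem_of_sub_conj_sq_eq hC hJ (w := φ) <| by
    rw [hσφ, map_mul, map_ofNat]
    linear_combination 4 * hφ
  have hm : 4 * m ∈ C := hσ.mem_of_sub_conj_sq_eq hC hJ (w := ψ) <| by
    rw [hσψ, map_mul, map_ofNat]
    linear_combination 4 * hψ
  obtain ⟨a, b, hab⟩ := hsm
  rw [← hC.dvd_pow_iff_dvd two_ne_zero, Ideal.span_singleton_pow, Ideal.dvd_span_singleton]
  convert C.add_mem (C.mul_mem_left a hs) (C.mul_mem_left b hm) using 1
  linear_combination -4 * hab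

end Ramified

section Ambiguous

/- Hilbert 90: `y / x` has norm one, so it is `z / σ z` for a suitable `z`. -/
theorem exists_map_eq_self (hσ : IsQuadraticConj σ) {ρ x y : B} {I : Ideal B} (hρ : ρ ≠ 0)
    (hσρ : σ ρ = -ρ) (hI : I ≠ 0) (hx : x ≠ 0)
    (hxy : Ideal.span {x} * I.map σ = Ideal.span {y} * I) (hN : y * σ y = x * σ x) :
    ∃ I' : Ideal B, I' ≠ 0 ∧ idealClass I' = idealClass I ∧ I'.map σ = I' := by
  obtain ⟨z, hz, hzy⟩ : ∃ z, z ≠ 0 ∧ σ z * y = x * z := by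
    by_cases h0 : σ x + y = 0
    · refine ⟨ρ * σ x, mul_ne_zero hρ ((map_ne_zero_iff σ σ.injective).mpr hx), ?_⟩
      rw [map_mul, hσρ, hσ.apply_apply]
      linear_combination -ρ * x * h0
    · refine ⟨σ x + y, h0, ?_⟩
      rw [map_add, hσ.apply_apply]
      linear_combination hN
  refine ⟨Ideal.span {z} * I, mul_ne_zero (span_singleton_ne_zero hz) hI,
    idealClass_span_singleton_mul hz hI, mul_left_cancel₀ (span_singleton_ne_zero hx) ?_⟩
  rw [Ideal.map_mul, Ideal.map_span, Set.image_singleton, mul_left_comm, hxy, ← mul_assoc,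
    ← mul_assoc, Ideal.span_singleton_mul_span_singleton,
    Ideal.span_singleton_mul_span_singleton, hzy]

theorem exists_eq_map_mul_of_map_eq_self (hσ : IsQuadraticConj σ) {I : Ideal B} (hI : I ≠ 0)
    (h : I.map σ = I) :
    ∃ (D C : Ideal A) (J : Ideal B), D ≠ 0 ∧ J ≠ 0 ∧ Squarefree C ∧
      J ^ 2 = C.map (algebraMap A B) ∧ I = D.map (algebraMap A B) * J := by
  have hsq := hσ.mul_map_eq_map_relNorm I
  obtain ⟨D, C, hD, hC, hDC⟩ :=
    exists_eq_sq_mul_squarefree (Ideal.relNorm_eq_bot_iff (R := A).not.mpr hI)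
  rw [h, hDC, Ideal.map_mul, Ideal.map_pow, ← pow_two] at hsq
  obtain ⟨J, rfl⟩ := (UniqueFactorizationMonoid.pow_dvd_pow_iff_dvd two_ne_zero).mp
    (Dvd.intro _ hsq.symm)
  refine ⟨D, C, J, hD, right_ne_zero_of_mul hI, hC, ?_, rfl⟩
  rw [mul_pow] at hsq
  exact mul_left_cancel₀ (pow_ne_zero 2 (Ideal.map_ne_bot_of_ne_bot hD)) hsq

theorem exists_mul_map_eq_of_idealClass_map_eq (hσ : IsQuadraticConj σ)
    (hunit : ∀ u : Aˣ, ∃ w : Bˣ, (w * σ w : B) = algebraMap A B u ∨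
      (w * σ w : B) = -algebraMap A B u)
    {I : Ideal B} (hI : I ≠ 0) (h : idealClass (I.map σ) = idealClass I) :
    ∃ x y : B, x ≠ 0 ∧ y ≠ 0 ∧ Ideal.span {x} * I.map σ = Ideal.span {y} * I ∧
      (y * σ y = x * σ x ∨ y * σ y = -(x * σ x)) := by
  obtain ⟨x, y, hx, hy, hxy⟩ := exists_span_singleton_mul_eq
    ((Ideal.map_eq_bot_iff_of_injective σ.injective).not.mpr hI) hI h
  have hnorm := congrArg (Ideal.relNorm A) hxy
  rw [map_mul, map_mul, Ideal.relNorm_map_algEquiv, Ideal.relNorm_singleton,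
    Ideal.relNorm_singleton] at hnorm
  obtain ⟨u, hu⟩ := Ideal.span_singleton_eq_span_singleton.mp
    (mul_right_cancel₀ (Ideal.relNorm_eq_bot_iff.not.mpr hI) hnorm)
  replace hu := congrArg (algebraMap A B) hu
  rw [map_mul, hσ.algebraMap_intNorm, hσ.algebraMap_intNorm] at hu
  obtain ⟨w, hw⟩ := hunit u
  refine ⟨x * w, y, mul_ne_zero hx w.ne_zero, hy, ?_, ?_⟩
  · rw [← hxy, Ideal.span_singleton_eq_span_singleton.mpr
      (associated_mul_unit_right x _ w.isUnit)]
  · rw [map_mul]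
    exact hw.imp (fun hw ↦ by linear_combination -hu - x * σ x * hw)
      fun hw ↦ by linear_combination -hu + x * σ x * hw

theorem exists_idealClass_eq_extendedHom_mul (hσ : IsQuadraticConj σ)
    (hram : ∀ (C : Ideal A) (J : Ideal B), Squarefree C → J ^ 2 = C.map (algebraMap A B) →
      C ∣ Ideal.span {2})
    {ρ x y : B} {I : Ideal B} (hρ : ρ ≠ 0) (hσρ : σ ρ = -ρ) (hI : I ≠ 0) (hx : x ≠ 0)
    (hxy : Ideal.span {x} * I.map σ = Ideal.span {y} * I) (hN : y * σ y = x * σ x) :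
    ∃ (c : ClassGroup A) (C : Ideal A) (J : Ideal B), C ∣ Ideal.span {2} ∧
      J ^ 2 = C.map (algebraMap A B) ∧
      idealClass I = ClassGroup.extendedHom A B c * idealClass J := by
  obtain ⟨I', hI', hII', hσI'⟩ := hσ.exists_map_eq_self hρ hσρ hI hx hxy hN
  obtain ⟨D, C, J, hD, hJ, hC, hJC, rfl⟩ := hσ.exists_eq_map_mul_of_map_eq_self hI' hσI'
  exact ⟨idealClass D, C, J, hram C J hC hJC, hJC, by
    rw [← hII', idealClass_mul (Ideal.map_ne_bot_of_ne_bot hD) hJ, extendedHom_idealClass B hD]⟩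

variable [Module.Free ℤ A] [Module.Finite ℤ A]

/- Two classes with ratios of norm `-1` multiply to one with a ratio of norm `1`; when such classes
exist, no ideal of norm two is available to produce a class outside the range. -/
theorem mul_mem_range_extendedHom (hσ : IsQuadraticConj σ) (h2 : Module.finrank ℤ A = 2)
    (hram : ∀ (C : Ideal A) (J : Ideal B), Squarefree C → J ^ 2 = C.map (algebraMap A B) →
      C ∣ Ideal.span {2})
    {U : Subgroup Bˣ} (htwo : IsSquareUpTo U (2 : B)) {ρ : B} (hρ : ρ ≠ 0) (hσρ : σ ρ = -ρ)
    (hunit : ∀ u : Aˣ, ∃ w : Bˣ, (w * σ w : B) = algebraMap A B u ∨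
      (w * σ w : B) = -algebraMap A B u)
    (hneg : (∃ P : Ideal A, Ideal.absNorm P = 2) → ∀ x y : B, x ≠ 0 → y ≠ 0 →
      y * σ y ≠ -(x * σ x))
    {I I' : Ideal B} (hI : I ≠ 0) (hI' : I' ≠ 0) (hσI : idealClass (I.map σ) = idealClass I)
    (hσI' : idealClass (I'.map σ) = idealClass I')
    (hIr : idealClass I ∉ (ClassGroup.extendedHom A B).range)
    (hIr' : idealClass I' ∉ (ClassGroup.extendedHom A B).range) :
    idealClass I * idealClass I' ∈ (ClassGroup.extendedHom A B).range := by
  obtain ⟨x, y, hx, hy, hxy, hN⟩ := hσ.exists_mul_map_eq_of_idealClass_map_eq hunit hI hσI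
  obtain ⟨x', y', hx', hy', hxy', hN'⟩ := hσ.exists_mul_map_eq_of_idealClass_map_eq hunit hI' hσI'
  by_cases hP : ∃ P : Ideal A, Ideal.absNorm P = 2
  · obtain ⟨c, C, J, hC, hJ, hc⟩ := hσ.exists_idealClass_eq_extendedHom_mul hram hρ hσρ hI hx hxy
      (hN.resolve_right (hneg hP x y hx hy))
    obtain ⟨c', C', J', hC', hJ', hc'⟩ := hσ.exists_idealClass_eq_extendedHom_mul hram hρ hσρ hI'
      hx' hxy' (hN'.resolve_right (hneg hP x' y' hx' hy'))
    have hn : Ideal.absNorm C = 2 := not_not.mp fun hn ↦ hIr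
      ⟨c, by rw [hc, idealClass_eq_one_of_dvd_span_two h2 htwo hC hJ hn, mul_one]⟩
    have hn' : Ideal.absNorm C' = 2 := not_not.mp fun hn ↦ hIr'
      ⟨c', by rw [hc', idealClass_eq_one_of_dvd_span_two h2 htwo hC' hJ' hn, mul_one]⟩
    rw [hc, hc', mul_mul_mul_comm]
    exact mul_mem (mul_mem ⟨c, rfl⟩ ⟨c', rfl⟩)
      (idealClass_mul_mem_range_extendedHom h2 htwo hC hC' hJ hJ' hn hn')
  · have hrange {I : Ideal B} (hI : I ≠ 0) {x y : B} (hx : x ≠ 0)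
        (hxy : Ideal.span {x} * I.map σ = Ideal.span {y} * I) (hN : y * σ y = x * σ x) :
        idealClass I ∈ (ClassGroup.extendedHom A B).range := by
      obtain ⟨c, C, J, hC, hJ, hc⟩ :=
        hσ.exists_idealClass_eq_extendedHom_mul hram hρ hσρ hI hx hxy hN
      exact ⟨c, by rw [hc, idealClass_eq_one_of_dvd_span_two h2 htwo hC hJ fun hn ↦ hP ⟨C, hn⟩,
        mul_one]⟩
    replace hN := hN.resolve_left fun hN ↦ hIr (hrange hI hx hxy hN)
    replace hN' := hN'.resolve_left fun hN ↦ hIr' (hrange hI' hx' hxy' hN)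
    rw [← idealClass_mul hI hI']
    apply hrange (mul_ne_zero hI hI') (mul_ne_zero hx hx') (y := y * y')
    · rw [Ideal.map_mul, ← Ideal.span_singleton_mul_span_singleton,
        ← Ideal.span_singleton_mul_span_singleton, mul_mul_mul_comm, hxy, hxy', mul_mul_mul_comm]
    · rw [map_mul, map_mul]
      linear_combination y' * σ y' * hN - x * σ x * hN'

end Ambiguous

end IsQuadraticConj

/-! ### Quadratic fields -/

theorem isSquare_of_sq_sub_mul_sq_eq {l : ℕ} [hl : Fact l.Prime] {d n : ℤ} (hd : Squarefree d)
    (hld : (l : ℤ) ∣ d) {X Y c : ℤ} (hc : c ≠ 0) (h : X ^ 2 - d * Y ^ 2 = n * c ^ 2) :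
    IsSquare (n : ZMod l) := by
  have hlp : Prime (l : ℤ) := Nat.prime_iff_prime_int.mp hl.out
  obtain ⟨k, c₀, hc₀, rfl⟩ :=
    WfDvdMonoid.max_power_factor hc hlp.irreducible
  induction k generalizing X Y with
  | zero =>
    have hmod := congrArg (Int.cast : ℤ → ZMod l) h
    push_cast [(ZMod.intCast_zmod_eq_zero_iff_dvd _ _).mpr hld] at hmod
    rw [← ZMod.intCast_zmod_eq_zero_iff_dvd] at hc₀
    refine ⟨X / c₀, ?_⟩
    field_simp
    linear_combination -hmod
  | succ k ih =>
    obtain ⟨d', rfl⟩ := hld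
    obtain ⟨X, rfl⟩ : (l : ℤ) ∣ X := hlp.dvd_of_dvd_pow (n := 2)
      ⟨n * l * (l ^ k * c₀) ^ 2 + d' * Y ^ 2, by linear_combination h⟩
    have hd' : ¬ (l : ℤ) ∣ d' := fun hdvd ↦ hlp.not_isUnit (hd l (mul_dvd_mul_left _ hdvd))
    obtain ⟨Y, rfl⟩ : (l : ℤ) ∣ Y := by
      have hdvd : (l : ℤ) ∣ d' * Y ^ 2 := ⟨X ^ 2 - n * (l ^ k * c₀) ^ 2, by
        apply mul_left_cancel₀ hlp.ne_zero
        linear_combination -h⟩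
      exact hlp.dvd_of_dvd_pow ((hlp.dvd_or_dvd hdvd).resolve_left hd')
    refine ih (mul_ne_zero (pow_ne_zero _ hlp.ne_zero) (right_ne_zero_of_mul hc)) (X := X)
      (Y := Y) (mul_left_cancel₀ (pow_ne_zero 2 hlp.ne_zero) ?_)
    linear_combination h

/-- The quadratic field `K` is `ℚ(√d)`: `θ` is a square root of `d` and `τ` is the nontrivial
automorphism, acting on the ring of integers. -/
structure IsSqrtConj {K : Type*} [Field K] [NumberField K] (d : ℤ) (θ : 𝓞 K)
    (τ : 𝓞 K ≃ₐ[ℤ] 𝓞 K) : Prop extends IsQuadraticConj τ where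
  sq_eq : θ ^ 2 = d
  conj_eq : τ θ = -θ

theorem exists_isSqrtConj {K : Type*} [Field K] [NumberField K] {d : ℤ} {θ : 𝓞 K}
    (h2 : Module.finrank ℚ K = 2) (hθ : θ ^ 2 = d) (hd : ¬ IsSquare d) :
    ∃ τ, IsSqrtConj d θ τ := by
  obtain ⟨τ, hτ⟩ := exists_isQuadraticConj ℤ ℚ K (𝓞 K) h2
  refine ⟨τ, ⟨hτ, hθ, ?_⟩⟩
  have hsq : τ θ ^ 2 = θ ^ 2 := by rw [← map_pow, hθ, map_intCast]
  refine (sq_eq_sq_iff_eq_or_eq_neg.mp hsq).resolve_left fun h ↦ hd ?_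
  obtain ⟨n, rfl⟩ := hτ.exists_algebraMap_eq θ h
  rw [eq_intCast] at hθ
  exact ⟨n, by rw [← pow_two]; exact_mod_cast hθ.symm⟩

theorem exists_eq_or_eq_neg_natCast_mul_sq {m : ℤ} (hm : m ≠ 0) :
    ∃ (r : ℕ) (b : ℤ), Squarefree r ∧ b ≠ 0 ∧ (m = r * b ^ 2 ∨ m = -(r * b ^ 2)) := by
  obtain ⟨b, r, hb, hr, rfl⟩ := exists_eq_sq_mul_squarefree hm
  refine ⟨r.natAbs, b, Int.squarefree_natAbs.mpr hr, hb, ?_⟩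
  rcases Int.natAbs_eq r with h | h
  · exact Or.inl (by rw [← h, mul_comm])
  · exact Or.inr (by rw [← neg_mul, ← h, mul_comm])

namespace IsSqrtConj

variable {K : Type*} [Field K] [NumberField K] {d : ℤ} {θ : 𝓞 K} {τ : 𝓞 K ≃ₐ[ℤ] 𝓞 K}

section Norm

variable (h : IsSqrtConj d θ τ)
include h

theorem finrank_rat : Module.finrank ℚ K = 2 := by
  rw [← RingOfIntegers.rank, h.finrank_eq_two]

theorem ne_zero (hd : d ≠ 0) : θ ≠ 0 := by
  rintro rfl
  exact hd (by exact_mod_cast h.sq_eq.symm.trans (zero_pow two_ne_zero))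

theorem norm_eq_mul_conj (x : 𝓞 K) : ((Algebra.norm ℤ x : ℤ) : 𝓞 K) = x * τ x := by
  rw [← h.algebraMap_intNorm, Algebra.intNorm_eq_norm, eq_intCast]

theorem exists_intCast_eq_add_conj (x : 𝓞 K) : ∃ t : ℤ, t = x + τ x := by
  simpa only [eq_intCast] using h.exists_add_conj_eq x

theorem exists_intCast_eq_mul_sub_conj (x : 𝓞 K) : ∃ m : ℤ, m = θ * (x - τ x) := by
  simpa only [eq_intCast] using h.exists_algebraMap_eq (θ * (x - τ x)) <| by
    rw [map_mul, map_sub, h.conj_eq, h.apply_apply]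
    ring

theorem isSquare_of_mul_conj_eq {l : ℕ} [Fact l.Prime] (hd : Squarefree d) (hld : (l : ℤ) ∣ d)
    {x : 𝓞 K} {n c : ℤ} (hc : c ≠ 0) (hx : x * τ x = n * c ^ 2) : IsSquare (n : ZMod l) := by
  obtain ⟨t, ht⟩ := h.exists_intCast_eq_add_conj x
  obtain ⟨m, hm⟩ := h.exists_intCast_eq_mul_sub_conj x
  refine isSquare_of_sq_sub_mul_sq_eq hd hld (X := d * t) (Y := m) (c := 2 * d * c)
    (by simp [hd.ne_zero, hc]) ?_
  have hK : ((d * t) ^ 2 - d * m ^ 2 : 𝓞 K) = n * (2 * d * c) ^ 2 := by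
    rw [ht, hm, ← h.sq_eq]
    linear_combination 4 * θ ^ 4 * hx
  exact_mod_cast hK

theorem mul_conj_ne_neg_sq {q : ℕ} (hq : q.Prime) (hq4 : q % 4 = 3) (hd : Squarefree d)
    (hqd : (q : ℤ) ∣ d) (x : 𝓞 K) (n : ℤ) (hn : n ≠ 0) : x * τ x ≠ -(n : 𝓞 K) ^ 2 := by
  intro hx
  have : Fact q.Prime := ⟨hq⟩
  have hsq := h.isSquare_of_mul_conj_eq hd hqd hn (x := x) (n := -1) (by rw [hx]; push_cast; ring)
  exact ZMod.exists_sq_eq_neg_one_iff.mp (by simpa using hsq) hq4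

theorem unit_mul_conj_eq_one (hneg : ∀ (x : 𝓞 K) (n : ℤ), n ≠ 0 → x * τ x ≠ -(n : 𝓞 K) ^ 2)
    (u : (𝓞 K)ˣ) : (u : 𝓞 K) * τ u = 1 := by
  have hu : IsUnit (Algebra.norm ℤ (u : 𝓞 K)) := u.isUnit.map _
  have hne := hneg u 1 one_ne_zero
  rw [← h.norm_eq_mul_conj] at hne ⊢
  rcases Int.isUnit_iff.mp hu with hu | hu <;> simp [hu] at hne ⊢

theorem exists_sq_eq_mul_of_mul_conj_eq_sq {x : 𝓞 K} (hx0 : x ≠ 0) {n : ℤ}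
    (hx : x * τ x = (n : 𝓞 K) ^ 2) :
    ∃ (r : ℕ) (b : ℤ) (z : 𝓞 K), Squarefree r ∧ b ≠ 0 ∧
      (z ^ 2 = x * r * b ^ 2 ∨ z ^ 2 = -x * r * b ^ 2) := by
  obtain ⟨m, z, hm, hz⟩ : ∃ (m : ℤ) (z : 𝓞 K), m ≠ 0 ∧ z ^ 2 = x * m := by
    by_cases h0 : x + n = 0
    · refine ⟨-n, x, ?_, by push_cast; linear_combination x * h0⟩
      rintro hn
      exact hx0 (by simpa [neg_eq_zero.mp hn] using h0)
    · obtain ⟨t, ht⟩ := h.exists_intCast_eq_add_conj x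
      have hsq : (x + n) ^ 2 = x * ((t + 2 * n : ℤ) : 𝓞 K) := by
        push_cast
        rw [ht]
        linear_combination -hx
      refine ⟨t + 2 * n, x + n, fun h1 ↦ h0 ?_, hsq⟩
      rwa [h1, Int.cast_zero, mul_zero, sq_eq_zero_iff] at hsq
  obtain ⟨r, b, hr, hb, rfl | rfl⟩ := exists_eq_or_eq_neg_natCast_mul_sq hm
  · exact ⟨r, b, z, hr, hb, Or.inl (by rw [hz]; push_cast; ring)⟩
  · exact ⟨r, b, z, hr, hb, Or.inr (by rw [hz]; push_cast; ring)⟩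

end Norm

section Genus

variable (h : IsSqrtConj d θ τ)
include h

theorem absNorm_eq_of_sq_eq_span {J : Ideal (𝓞 K)} {r : ℕ} (hJ : J ^ 2 = Ideal.span {(r : 𝓞 K)}) :
    Ideal.absNorm J = r := by
  apply Nat.pow_left_injective two_ne_zero
  change Ideal.absNorm J ^ 2 = r ^ 2
  rw [← map_pow, hJ, Ideal.absNorm_span_natCast, h.finrank_eq_two]

theorem dvd_of_sub_conj_sq_eq {J : Ideal (𝓞 K)} {r : ℕ} (hr : Squarefree r)
    (hJ : J ^ 2 = Ideal.span {(r : 𝓞 K)}) {w : 𝓞 K} {a : ℤ} (hw : (w - τ w) ^ 2 = a) :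
    (r : ℤ) ∣ a := by
  have hC : Squarefree (Ideal.span {(r : ℤ)}) := fun I hI ↦ by
    rw [← Ideal.span_singleton_generator I, Ideal.span_singleton_mul_span_singleton,
      Ideal.span_singleton_dvd_span_singleton_iff_dvd] at hI
    rw [Ideal.isUnit_iff, ← Ideal.span_singleton_generator I, Ideal.span_singleton_eq_top]
    exact Int.squarefree_natCast.mpr hr _ hI
  rw [← Ideal.mem_span_singleton]
  exact h.mem_of_sub_conj_sq_eq hC (J := J) (by simpa [Ideal.map_span] using hJ) (w := w)
    (by rw [hw, eq_intCast])

theorem dvd_two_mul_of_sq_eq_span {J : Ideal (𝓞 K)} {r : ℕ} (hr : Squarefree r)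
    (hJ : J ^ 2 = Ideal.span {(r : 𝓞 K)}) : (r : ℤ) ∣ 2 * d := by
  have hdvd : (r : ℤ) ∣ 4 * d := h.dvd_of_sub_conj_sq_eq hr hJ (w := θ) <| by
    rw [h.conj_eq]
    push_cast
    linear_combination 4 * h.sq_eq
  exact ((Int.squarefree_natCast.mpr hr).dvd_pow_iff_dvd two_ne_zero).mp
    (hdvd.trans ⟨d, by ring⟩)

theorem exists_half_add (hd : d % 4 = 1) :
    ∃ w : 𝓞 K, 2 * w = 1 + θ ∧ w ^ 2 - w = ((d - 1) / 4 : ℤ) := by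
  obtain ⟨e, rfl⟩ : ∃ e, d = 4 * e + 1 := ⟨d / 4, by omega⟩
  have hθ : (θ : K) ^ 2 = 4 * e + 1 := by
    rw [← map_pow, h.sq_eq, map_intCast]
    push_cast
    rfl
  have hint : IsIntegral ℤ ((1 + (θ : K)) / 2) := by
    refine ⟨.X ^ 2 - .X - .C e, by monicity!, ?_⟩
    simp only [Polynomial.eval₂_sub, Polynomial.eval₂_pow, Polynomial.eval₂_X,
      Polynomial.eval₂_C]
    rw [eq_intCast]
    linear_combination hθ / 4
  obtain ⟨w, hw⟩ : ∃ w : 𝓞 K, 2 * w = 1 + θ := ⟨⟨_, hint⟩, RingOfIntegers.ext <| by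
    push_cast
    exact mul_div_cancel₀ _ two_ne_zero⟩
  refine ⟨w, hw, mul_left_cancel₀ (show (4 : 𝓞 K) ≠ 0 by norm_num) ?_⟩
  rw [show (4 * e + 1 - 1) / 4 = e by omega]
  have hθ' := h.sq_eq
  push_cast at hθ'
  linear_combination (2 * w + θ - 1) * hw + hθ'

theorem dvd_of_sq_eq_span (hd : d % 4 = 1) {J : Ideal (𝓞 K)} {r : ℕ} (hr : Squarefree r)
    (hJ : J ^ 2 = Ideal.span {(r : 𝓞 K)}) : (r : ℤ) ∣ d := by
  obtain ⟨w, hw, -⟩ := h.exists_half_add hd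
  have hτw : 2 * τ w = 1 - θ := by
    rw [sub_eq_add_neg, ← h.conj_eq, ← map_one τ, ← map_add, ← hw, map_mul, map_ofNat]
  refine h.dvd_of_sub_conj_sq_eq hr hJ (w := w) ?_
  have hsub : w - τ w = θ := by
    apply mul_left_cancel₀ (two_ne_zero (α := 𝓞 K))
    linear_combination hw - hτw
  rw [hsub, h.sq_eq]

theorem exists_sq_eq_span_of_sq_eq_one
    (hneg : ∀ (x : 𝓞 K) (n : ℤ), n ≠ 0 → x * τ x ≠ -(n : 𝓞 K) ^ 2) {y : ClassGroup (𝓞 K)}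
    (hy : y ^ 2 = 1) : ∃ (J : Ideal (𝓞 K)) (r : ℕ), J ≠ 0 ∧ idealClass J = y ∧ Squarefree r ∧
      J ^ 2 = Ideal.span {(r : 𝓞 K)} := by
  obtain ⟨I, hI, rfl⟩ := exists_idealClass_eq y
  rw [← idealClass_pow hI] at hy
  obtain ⟨x, hx0, hx⟩ := exists_eq_span_singleton_of_idealClass_eq_one (pow_ne_zero 2 hI) hy
  have hnorm : (Ideal.absNorm I : ℤ) ^ 2 = (Algebra.norm ℤ x).natAbs := by
    exact_mod_cast by rw [← map_pow, hx, Ideal.absNorm_span_singleton]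
  have hn0 : (Ideal.absNorm I : ℤ) ≠ 0 := by exact_mod_cast Ideal.absNorm_eq_zero_iff.not.mpr hI
  have hxn : x * τ x = ((Ideal.absNorm I : ℤ) : 𝓞 K) ^ 2 := by
    have hne := hneg x _ hn0
    rw [← h.norm_eq_mul_conj] at hne ⊢
    rw [← Int.cast_pow, hnorm] at hne ⊢
    rcases Int.natAbs_eq (Algebra.norm ℤ x) with h1 | h1
    · rw [← h1]
    · exact absurd (by rw [← Int.cast_neg, ← h1]) hne
  obtain ⟨r, b, z, hr, hb, hz⟩ := h.exists_sq_eq_mul_of_mul_conj_eq_sq hx0 hxn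
  obtain ⟨x', hx', hz'⟩ : ∃ x', I ^ 2 = Ideal.span {x'} ∧ z ^ 2 = x' * r * b ^ 2 := by
    rcases hz with hz | hz
    · exact ⟨x, hx, hz⟩
    · exact ⟨-x, by rw [hx, Ideal.span_singleton_neg], hz⟩
  obtain ⟨J, hJ0, hJ, hJr⟩ := exists_idealClass_eq_of_sq_eq_span_singleton
    (Int.cast_ne_zero.mpr hb) (Nat.cast_ne_zero.mpr hr.ne_zero) hI hx' hz'
  exact ⟨J, r, hJ0, hJ, hr, hJr⟩

theorem isSquare_of_idealClass_eq_sq {p : ℕ} [Fact p.Prime] (hp4 : p % 4 = 1)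
    (hd : Squarefree d) (hpd : (p : ℤ) ∣ d) {I : Ideal (𝓞 K)} (hI : I ≠ 0)
    {y : ClassGroup (𝓞 K)} (hy : idealClass I = y ^ 2) {n e : ℕ} (he : e ≠ 0)
    (hn : Ideal.absNorm I = n * e ^ 2) : IsSquare (n : ZMod p) := by
  obtain ⟨M, hM, rfl⟩ := exists_idealClass_eq y
  rw [← idealClass_pow hM] at hy
  obtain ⟨x, z, hx, -, hxz⟩ := exists_span_singleton_mul_eq hI (pow_ne_zero 2 hM) hy
  have hnorm := congrArg Ideal.absNorm hxz
  simp only [map_mul, map_pow, Ideal.absNorm_span_singleton, hn] at hnorm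
  set a := Algebra.norm ℤ x
  set m := Ideal.absNorm M
  have hc : (a * e : ℤ) ≠ 0 :=
    mul_ne_zero (Algebra.norm_ne_zero_iff.mpr hx) (Nat.cast_ne_zero.mpr he)
  have hprod : x * z * m * τ (x * z * m) = (a * Algebra.norm ℤ z * m ^ 2 : ℤ) := by
    simp only [map_mul, map_natCast]
    push_cast
    rw [h.norm_eq_mul_conj, h.norm_eq_mul_conj]
    ring
  have habs : a.natAbs * (n * (e : ℤ) ^ 2) = (Algebra.norm ℤ z).natAbs * (m : ℤ) ^ 2 := by
    exact_mod_cast hnorm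
  obtain hpos | hpos : a * Algebra.norm ℤ z * m ^ 2 = n * (a * e) ^ 2 ∨
      a * Algebra.norm ℤ z * m ^ 2 = (-n) * (a * e) ^ 2 := by
    rw [Int.natCast_natAbs, Int.natCast_natAbs] at habs
    rcases abs_choice a with h1 | h1 <;> rcases abs_choice (Algebra.norm ℤ z) with h2 | h2 <;>
      rw [h1, h2] at habs
    exacts [.inl (by linear_combination -a * habs), .inr (by linear_combination a * habs),
      .inr (by linear_combination -a * habs), .inl (by linear_combination a * habs)]
  · simpa using h.isSquare_of_mul_conj_eq (n := n) hd hpd hc (by rw [hprod, hpos]; push_cast; rfl)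
  · have hsq := h.isSquare_of_mul_conj_eq (n := -n) hd hpd hc (by
      rw [hprod, hpos]
      push_cast
      rfl)
    have hneg : IsSquare (-1 : ZMod p) := ZMod.exists_sq_eq_neg_one_iff.mpr (by omega)
    simpa using hneg.mul hsq

end Genus

end IsSqrtConj

/-! ### Units of real quadratic fields -/

theorem sq_ne_of_closure_neg_one_pair_eq_top
    {G : Type*} [CommGroup G] [HasDistribNeg G] {ε : G} (hε : ¬ IsOfFinOrder ε)
    (htop : Subgroup.closure {-1, ε} = ⊤) (v : G) : v ^ 2 ≠ ε ∧ v ^ 2 ≠ -ε := by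
  obtain ⟨m, n, rfl⟩ := Subgroup.mem_closure_pair.mp (htop ▸ Subgroup.mem_top v)
  have hsq : ((-1 : G) ^ m * ε ^ n) ^ 4 = ε ^ (4 * n) := by
    rw [mul_pow, ← zpow_natCast, ← zpow_mul, Nat.cast_ofNat, mul_comm m, zpow_mul,
      show (-1 : G) ^ (4 : ℤ) = 1 from by norm_num [zpow_ofNat], one_zpow, one_mul,
      ← zpow_natCast, ← zpow_mul, mul_comm n]
    rfl
  have hne : ((-1 : G) ^ m * ε ^ n) ^ 4 ≠ ε ^ 2 := fun h ↦ by
    rw [hsq, ← zpow_natCast] at h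
    have := injective_zpow_iff_not_isOfFinOrder.mpr hε h
    push_cast at this
    omega
  refine ⟨fun h ↦ hne ?_, fun h ↦ hne ?_⟩
  · rw [pow_mul _ 2 2, h]
  · rw [pow_mul _ 2 2, h, neg_sq]

section RealUnits

open NumberField.Units

variable {K : Type*} [Field K] [NumberField K]

theorem eq_one_or_eq_neg_one_of_mem_torsion [IsTotallyReal K] {ζ : (𝓞 K)ˣ} (hζ : ζ ∈ torsion K) :
    ζ = 1 ∨ ζ = -1 := by
  obtain ⟨φ⟩ : Nonempty (K →+* ℂ) := inferInstance
  let ι := (IsTotallyReal.complexEmbedding_isReal φ).embedding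
  obtain ⟨n, hn, h⟩ := isOfFinOrder_iff_pow_eq_one.mp ((CommGroup.mem_torsion _).mp hζ)
  have hι : ι (ζ : K) ^ n = 1 := by rw [← map_pow, ← coe_pow, h, coe_one, map_one]
  refine ((pow_eq_one_iff_cases.mp hι).resolve_left hn.ne').imp (fun h1 ↦ ?_) fun h1 ↦ ?_
  · exact coe_injective K (ι.injective (by simpa using h1))
  · exact coe_injective K (ι.injective (by simpa using h1.1))

theorem exists_closure_neg_one_pair_eq_top [IsTotallyReal K] (hrank : rank K = 1) :
    ∃ ε : (𝓞 K)ˣ, ¬ IsOfFinOrder ε ∧ Subgroup.closure {-1, ε} = ⊤ := by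
  have : Unique (Fin (rank K)) := by rw [hrank]; infer_instance
  refine ⟨fundSystem K default, fun h ↦ ?_, eq_top_iff.mpr ?_⟩
  · have h0 := fun_eq_repr K (x := fundSystem K default) (f := 0)
      ((CommGroup.mem_torsion _).mpr h) (by simp)
    have h1 := fun_eq_repr K (x := fundSystem K default) (f := fun _ ↦ 1)
      (one_mem (torsion K)) (by simp)
    exact zero_ne_one (congrFun (h0.trans h1.symm) default)
  · rw [← closure_fundSystem_sup_torsion_eq_top K, sup_le_iff, Subgroup.closure_le]
    refine ⟨?_, fun ζ hζ ↦ ?_⟩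
    · rintro _ ⟨i, rfl⟩
      rw [Unique.eq_default i]
      exact Subgroup.subset_closure (by simp)
    · rcases eq_one_or_eq_neg_one_of_mem_torsion hζ with rfl | rfl
      · exact one_mem _
      · exact Subgroup.subset_closure (by simp)

end RealUnits

namespace IsSqrtConj

variable {K : Type*} [Field K] [NumberField K] {d : ℤ} {θ : 𝓞 K} {τ : 𝓞 K ≃ₐ[ℤ] 𝓞 K}

section Units

variable (h : IsSqrtConj d θ τ)
include h

theorem isTotallyReal (hd : 0 < d) : IsTotallyReal K := by
  have hθ0 : (θ : K) ≠ 0 := RingOfIntegers.coe_ne_zero_iff.mpr (h.ne_zero hd.ne')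
  have hθ : (θ : K) ∈ maximalRealSubfield K := fun φ ↦ by
    have hsq : φ θ ^ 2 = (√(d : ℝ) : ℂ) ^ 2 := by
      rw [← map_pow, ← map_pow, h.sq_eq, ← Complex.ofReal_pow,
        Real.sq_sqrt (by exact_mod_cast hd.le)]
      simp
    rcases sq_eq_sq_iff_eq_or_eq_neg.mp hsq with h1 | h1 <;> rw [h1] <;> simp
  have hint : ∀ x : 𝓞 K, (x : K) ∈ maximalRealSubfield K := fun x ↦ by
    obtain ⟨t, ht⟩ := h.exists_intCast_eq_add_conj x
    obtain ⟨m, hm⟩ := h.exists_intCast_eq_mul_sub_conj x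
    have hx : (x : K) = (t * θ + m) / (2 * θ) := by
      rw [eq_div_iff (mul_ne_zero two_ne_zero hθ0)]
      have hx : x * (2 * θ) = t * θ + m := by rw [ht, hm]; ring
      simpa only [map_mul, map_add, map_intCast, map_ofNat] using congrArg (algebraMap _ K) hx
    rw [hx]
    exact div_mem (add_mem (mul_mem (intCast_mem _ t) hθ) (intCast_mem _ m))
      (mul_mem (ofNat_mem _ 2) hθ)
  rw [← maximalRealSubfield_eq_top_iff_isTotallyReal, eq_top_iff]
  intro x _
  obtain ⟨a, b, -, rfl⟩ := IsFractionRing.div_surjective (𝓞 K) x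
  exact div_mem (hint a) (hint b)

theorem rank_eq_one (hd : 0 < d) : Units.rank K = 1 := by
  have := h.isTotallyReal hd
  rw [Units.rank, InfinitePlace.card_eq_nrRealPlaces_add_nrComplexPlaces,
    IsTotallyReal.nrComplexPlaces_eq_zero, add_zero, ← IsTotallyReal.finrank, h.finrank_rat]

theorem exists_sq_eq_unit_mul (hneg : ∀ (x : 𝓞 K) (n : ℤ), n ≠ 0 → x * τ x ≠ -(n : 𝓞 K) ^ 2)
    (u : (𝓞 K)ˣ) : ∃ (r : ℕ) (z : 𝓞 K), Squarefree r ∧ (z ^ 2 = u * r ∨ z ^ 2 = -u * r) := by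
  obtain ⟨r, b, z, hr, hb, hz⟩ := h.exists_sq_eq_mul_of_mul_conj_eq_sq (n := 1) u.ne_zero
    (by rw [h.unit_mul_conj_eq_one hneg]; simp)
  have hb0 : (b : 𝓞 K) ≠ 0 := Int.cast_ne_zero.mpr hb
  have hdvd : (b : 𝓞 K) ^ 2 ∣ z ^ 2 := by
    rcases hz with hz | hz <;> exact hz ▸ dvd_mul_left _ _
  obtain ⟨y, rfl⟩ := (IsIntegrallyClosed.pow_dvd_pow_iff two_ne_zero).mp hdvd
  refine ⟨r, y, hr, hz.imp (fun hz ↦ ?_) fun hz ↦ ?_⟩ <;>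
  · apply mul_left_cancel₀ (pow_ne_zero 2 hb0)
    linear_combination hz

theorem exists_fundamental_unit_sq_eq (hd : 0 < d)
    (hneg : ∀ (x : 𝓞 K) (n : ℤ), n ≠ 0 → x * τ x ≠ -(n : 𝓞 K) ^ 2) :
    ∃ (ε : (𝓞 K)ˣ) (r : ℕ) (z : 𝓞 K), Subgroup.closure {-1, ε} = ⊤ ∧ Squarefree r ∧ r ≠ 1 ∧
      (r : ℤ) ≠ d ∧ z ^ 2 = ε * r := by
  have := h.isTotallyReal hd
  obtain ⟨ε, hε, htop⟩ := exists_closure_neg_one_pair_eq_top (h.rank_eq_one hd)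
  obtain ⟨r, z, hr, hz⟩ := h.exists_sq_eq_unit_mul hneg ε
  have hsq : ∀ v : 𝓞 K, v ^ 2 ≠ ε ∧ v ^ 2 ≠ -ε := fun v ↦ by
    by_cases hv : IsUnit v
    · obtain ⟨v, rfl⟩ := hv
      simpa [Units.ext_iff] using sq_ne_of_closure_neg_one_pair_eq_top hε htop v
    · have hv' : ∀ w : (𝓞 K)ˣ, v ^ 2 ≠ w := fun w hw ↦
        hv ((isUnit_pow_iff two_ne_zero).mp (hw ▸ w.isUnit))
      exact ⟨hv' ε, hv' (-ε)⟩
  have hr1 : r ≠ 1 := by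
    rintro rfl
    rw [Nat.cast_one, mul_one, mul_one] at hz
    exact hz.elim (hsq z).1 (hsq z).2
  have hrd : (r : ℤ) ≠ d := fun hrd ↦ by
    have hrθ : (r : 𝓞 K) = θ ^ 2 := by rw [h.sq_eq, ← hrd, Int.cast_natCast]
    rw [hrθ] at hz
    have hdvd : θ ^ 2 ∣ z ^ 2 := by rcases hz with hz | hz <;> exact hz ▸ dvd_mul_left _ _
    obtain ⟨v, rfl⟩ := (IsIntegrallyClosed.pow_dvd_pow_iff two_ne_zero).mp hdvd
    have hcancel {a b : 𝓞 K} : θ ^ 2 * a = θ ^ 2 * b → a = b :=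
      mul_left_cancel₀ (pow_ne_zero 2 (h.ne_zero hd.ne'))
    refine hz.elim (fun hz ↦ (hsq v).1 (hcancel ?_)) fun hz ↦ (hsq v).2 (hcancel ?_) <;>
      linear_combination hz
  rcases hz with hz | hz
  · exact ⟨ε, r, z, htop, hr, hr1, hrd, hz⟩
  · refine ⟨-ε, r, z, ?_, hr, hr1, hrd, hz⟩
    rw [eq_top_iff, ← htop, Subgroup.closure_le, Set.insert_subset_iff, Set.singleton_subset_iff]
    refine ⟨Subgroup.subset_closure (by simp), ?_⟩
    have hmem : -1 * -ε ∈ Subgroup.closure {-1, -ε} :=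
      mul_mem (Subgroup.subset_closure (by simp)) (Subgroup.subset_closure (by simp))
    simpa using hmem

end Units

end IsSqrtConj

/-! ### Class groups of `ℚ(√s)`, `ℚ(√(pq))` and `ℚ(√(pqs))` -/

section PrimeDivisors

variable {p q s r : ℕ}

theorem of_dvd_mul_mul_of_prime {P : ℕ → Prop} (one : P 1) (mul : ∀ a b, P a → P b → P (a * b))
    (hp : p.Prime) (hq : q.Prime) (hs : s.Prime) (hPp : P p) (hPq : P q) (hPs : P s)
    (hr : r ∣ p * q * s) : P r := by
  have of_dvd_prime {l m : ℕ} (hl : l.Prime) (hPl : P l) (hm : m ∣ l) : P m := by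
    rcases (Nat.dvd_prime hl).mp hm with rfl | rfl
    exacts [one, hPl]
  obtain ⟨m, c, hm, hc, rfl⟩ := Nat.dvd_mul.mp hr
  obtain ⟨a, b, ha, hb, rfl⟩ := Nat.dvd_mul.mp hm
  exact mul _ _ (mul _ _ (of_dvd_prime hp hPp ha) (of_dvd_prime hq hPq hb)) (of_dvd_prime hs hPs hc)

theorem eq_of_dvd_mul_of_prime (hp : p.Prime) (hq : q.Prime) (hr : r ∣ p * q) :
    r = 1 ∨ r = p ∨ r = q ∨ r = p * q := by
  obtain ⟨a, b, ha, hb, rfl⟩ := Nat.dvd_mul.mp hr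
  rcases (Nat.dvd_prime hp).mp ha with rfl | rfl <;>
    rcases (Nat.dvd_prime hq).mp hb with rfl | rfl <;> simp

theorem squarefree_mul_of_prime (hp : p.Prime) (hq : q.Prime) (hpq : p ≠ q) :
    Squarefree (p * q) :=
  (Nat.squarefree_mul ((Nat.coprime_primes hp hq).mpr hpq)).mpr
    ⟨hp.prime.squarefree, hq.prime.squarefree⟩

theorem squarefree_mul_mul_of_prime (hp : p.Prime) (hq : q.Prime) (hs : s.Prime) (hpq : p ≠ q)
    (hps : p ≠ s) (hqs : q ≠ s) : Squarefree (p * q * s) :=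
  (Nat.squarefree_mul (((Nat.coprime_primes hp hs).mpr hps).mul_left
    ((Nat.coprime_primes hq hs).mpr hqs))).mpr
    ⟨squarefree_mul_of_prime hp hq hpq, hs.prime.squarefree⟩

end PrimeDivisors

namespace IsSquareUpTo

variable {R : Type*} [CommRing R] [IsDomain R] [IsIntegrallyClosed R] [CharZero R]
  {U : Subgroup Rˣ} {p q s : ℕ}

theorem exists_prime_of_dvd_mul_mul (hp : p.Prime) (hq : q.Prime) (hs : s.Prime)
    (hpqs : IsSquareUpTo U (p * q * s : R)) {r : ℕ} (hr : r ∣ p * q * s) (hr1 : r ≠ 1)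
    (hrd : r ≠ p * q * s) (hsq : IsSquareUpTo U (r : R)) :
    IsSquareUpTo U (p : R) ∨ IsSquareUpTo U (q : R) ∨ IsSquareUpTo U (s : R) := by
  have hp0 : (p : R) ≠ 0 := Nat.cast_ne_zero.mpr hp.ne_zero
  have hq0 : (q : R) ≠ 0 := Nat.cast_ne_zero.mpr hq.ne_zero
  have hs0 : (s : R) ≠ 0 := Nat.cast_ne_zero.mpr hs.ne_zero
  obtain ⟨m, c, hm, hc, rfl⟩ := Nat.dvd_mul.mp hr
  rcases eq_of_dvd_mul_of_prime hp hq hm with rfl | rfl | rfl | rfl <;>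
    rcases (Nat.dvd_prime hs).mp hc with rfl | rfl <;>
    push_cast [one_mul, mul_one] at hsq
  · exact absurd (one_mul 1) hr1
  · exact .inr (.inr hsq)
  · exact .inl hsq
  · exact .inr (.inl (.of_mul_right (mul_ne_zero hp0 hs0) (by convert hpqs using 1; ring) hsq))
  · exact .inr (.inl hsq)
  · exact .inl (.of_mul_right (mul_ne_zero hq0 hs0) (by convert hpqs using 1; ring) hsq)
  · exact .inr (.inr (.of_mul_right (mul_ne_zero hp0 hq0) (by convert hpqs using 1; ring) hsq))
  · exact absurd rfl hrd

theorem or_mul_of_dvd_mul_mul (hp : p.Prime) (hq : q.Prime) (hs : s.Prime)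
    (hpqs : IsSquareUpTo U (p * q * s : R)) (hsp : IsSquareUpTo U (p : R)) {r : ℕ}
    (hr : r ∣ p * q * s) : IsSquareUpTo U (r : R) ∨ IsSquareUpTo U (r * q : R) := by
  have hp0 : (p : R) ≠ 0 := Nat.cast_ne_zero.mpr hp.ne_zero
  have hq0 : (q : R) ≠ 0 := Nat.cast_ne_zero.mpr hq.ne_zero
  have hqq : IsSquareUpTo U (q * q : R) := .of_sq_eq (sq (q : R))
  refine of_dvd_mul_mul_of_prime
    (P := fun r ↦ IsSquareUpTo U (r : R) ∨ IsSquareUpTo U (r * q : R)) ?_ ?_ hp hq hs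
    (.inl hsp) (.inr hqq) (.inr ?_) hr
  · exact .inl (.of_sq_eq (z := 1) (by simp))
  · rintro a b (ha | ha) (hb | hb) <;> push_cast
    · exact .inl (ha.mul hb)
    · exact .inr (by simpa only [mul_assoc] using ha.mul hb)
    · exact .inr (by simpa only [mul_right_comm] using ha.mul hb)
    · exact .inl (.of_mul_right (mul_ne_zero hq0 hq0) (by convert ha.mul hb using 1; ring) hqq)
  · have hsqp : IsSquareUpTo U (s * q * p : R) := by convert hpqs using 1; ring
    exact hsqp.of_mul_right hp0 hsp

theorem exists_or_mul_of_dvd_mul_mul (hp : p.Prime) (hq : q.Prime) (hs : s.Prime)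
    (hpqs : IsSquareUpTo U (p * q * s : R)) (h : IsSquareUpTo U (p : R) ∨
      IsSquareUpTo U (q : R) ∨ IsSquareUpTo U (s : R)) :
    ∃ t : ℕ, t ≠ 0 ∧ ∀ r, r ∣ p * q * s → IsSquareUpTo U (r : R) ∨ IsSquareUpTo U (r * t : R) := by
  rcases h with h | h | h
  · exact ⟨q, hq.ne_zero, fun r hr ↦ or_mul_of_dvd_mul_mul hp hq hs hpqs h hr⟩
  · rw [mul_comm (p : R)] at hpqs
    exact ⟨p, hp.ne_zero, fun r hr ↦
      or_mul_of_dvd_mul_mul hq hp hs hpqs h (by rwa [mul_comm q])⟩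
  · rw [← mul_rotate] at hpqs
    exact ⟨p, hp.ne_zero, fun r hr ↦
      or_mul_of_dvd_mul_mul hs hp hq hpqs h (by rwa [mul_rotate])⟩

end IsSquareUpTo

theorem idealClass_eq_of_isSquareUpTo_mul {R : Type*} [CommRing R] [IsDedekindDomain R]
    {U : Subgroup Rˣ} {I J : Ideal R} {x y : R} (hI : I ≠ 0) (hJ : J ≠ 0)
    (hIx : I ^ 2 = Ideal.span {x}) (hJy : J ^ 2 = Ideal.span {y})
    (hxy : IsSquareUpTo U (x * y)) : idealClass I = idealClass J := by
  have hIJ : idealClass I * idealClass J = 1 := by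
    rw [← idealClass_mul hI hJ]
    exact hxy.idealClass_eq_one (by rw [mul_pow, hIx, hJy, Ideal.span_singleton_mul_span_singleton])
  have hJJ : idealClass J * idealClass J = 1 := by
    rw [← sq, ← idealClass_pow hJ, hJy, idealClass_span_singleton]
  exact mul_right_cancel (hIJ.trans hJJ.symm)

namespace IsSqrtConj

variable {K : Type*} [Field K] [NumberField K] {θ : 𝓞 K} {τ : 𝓞 K ≃ₐ[ℤ] 𝓞 K}

theorem isSquareUpTo_self {d : ℕ} (h : IsSqrtConj d θ τ) {U : Subgroup (𝓞 K)ˣ} :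
    IsSquareUpTo U (d : 𝓞 K) :=
  .of_sq_eq (by rw [h.sq_eq, Int.cast_natCast])

section Prime

variable {s : ℕ} (hs : s.Prime) (hs4 : s % 4 = 3) (h : IsSqrtConj s θ τ)
include hs hs4 h

theorem isSquareUpTo_two : IsSquareUpTo ⊤ (2 : 𝓞 K) := by
  have hd := Int.squarefree_natCast.mpr hs.prime.squarefree
  obtain ⟨ε, r, z, -, hr, hr1, hrs, hz⟩ := h.exists_fundamental_unit_sq_eq
    (by exact_mod_cast hs.pos) (h.mul_conj_ne_neg_sq hs hs4 hd dvd_rfl)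
  have hsq : IsSquareUpTo ⊤ (r : 𝓞 K) := ⟨ε, trivial, z, hz⟩
  obtain ⟨y, hy⟩ := hsq.exists_span_singleton_sq_eq
  have hdvd : r ∣ 2 * s := by exact_mod_cast h.dvd_two_mul_of_sq_eq_span hr hy
  rcases eq_of_dvd_mul_of_prime Nat.prime_two hs hdvd with rfl | rfl | rfl | rfl
  · exact absurd rfl hr1
  · exact_mod_cast hsq
  · exact absurd rfl hrs
  · push_cast at hsq
    exact hsq.of_mul_right (Nat.cast_ne_zero.mpr hs.ne_zero) h.isSquareUpTo_self

theorem eq_one_of_sq_eq_one {y : ClassGroup (𝓞 K)} (hy : y ^ 2 = 1) : y = 1 := by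
  have hd := Int.squarefree_natCast.mpr hs.prime.squarefree
  obtain ⟨J, r, -, rfl, hr, hJ⟩ :=
    h.exists_sq_eq_span_of_sq_eq_one (h.mul_conj_ne_neg_sq hs hs4 hd dvd_rfl) hy
  have hdvd : r ∣ 2 * s := by exact_mod_cast h.dvd_two_mul_of_sq_eq_span hr hJ
  have htwo := h.isSquareUpTo_two hs hs4
  have hself : IsSquareUpTo ⊤ (s : 𝓞 K) := h.isSquareUpTo_self
  refine IsSquareUpTo.idealClass_eq_one (U := ⊤) hJ ?_
  rcases eq_of_dvd_mul_of_prime Nat.prime_two hs hdvd with rfl | rfl | rfl | rfl <;> push_cast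
  exacts [.of_sq_eq (one_pow 2), htwo, hself, htwo.mul hself]

end Prime

section PrimeMulPrime

variable {p q : ℕ} (hp : p.Prime) (hq : q.Prime) (hp8 : p % 8 = 5) (hq4 : q % 4 = 3)
  (hqp : IsSquare (q : ZMod p)) (h : IsSqrtConj ((p * q : ℕ) : ℤ) θ τ)
include hp hq hp8 hq4 h

theorem mul_conj_ne_neg_sq_of_prime_mul_prime (x : 𝓞 K) (n : ℤ) (hn : n ≠ 0) :
    x * τ x ≠ -(n : 𝓞 K) ^ 2 := by
  have hd := squarefree_mul_of_prime hp hq (by rintro rfl; omega)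
  exact h.mul_conj_ne_neg_sq hq hq4 (Int.squarefree_natCast.mpr hd) (by simp) x n hn

theorem exists_sq_eq_span_dvd_two_mul {y : ClassGroup (𝓞 K)} (hy : y ^ 2 = 1) :
    ∃ (J : Ideal (𝓞 K)) (r : ℕ), J ≠ 0 ∧ idealClass J = y ∧ r ∣ 2 * (p * q) ∧
      J ^ 2 = Ideal.span {(r : 𝓞 K)} := by
  obtain ⟨J, r, hJ0, hJy, hr, hJ⟩ := h.exists_sq_eq_span_of_sq_eq_one
    (h.mul_conj_ne_neg_sq_of_prime_mul_prime hp hq hp8 hq4) hy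
  exact ⟨J, r, hJ0, hJy, by exact_mod_cast h.dvd_two_mul_of_sq_eq_span hr hJ, hJ⟩

include hqp

theorem absNorm_dvd_of_idealClass_eq_sq {I : Ideal (𝓞 K)} (hI : I ≠ 0) {y : ClassGroup (𝓞 K)}
    (hy : idealClass I = y ^ 2) (hdvd : Ideal.absNorm I ∣ 2 * (p * q)) :
    Ideal.absNorm I ∣ p * q := by
  have : Fact p.Prime := ⟨hp⟩
  have hd := squarefree_mul_of_prime hp hq (by rintro rfl; omega)
  have hq0 : (q : ZMod p) ≠ 0 := by
    rw [Ne, ZMod.natCast_eq_zero_iff, Nat.prime_dvd_prime_iff_eq hp hq]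
    rintro rfl
    omega
  have h2 : ¬ IsSquare (2 : ZMod p) := by
    rw [ZMod.exists_sq_eq_two_iff (by rintro rfl; omega)]
    omega
  have h2q : ¬ IsSquare ((2 * q : ℕ) : ZMod p) := fun hsq ↦ h2 <| by
    simpa [mul_div_cancel_right₀ _ hq0] using hsq.div hqp
  have hχ {I : Ideal (𝓞 K)} (hI : I ≠ 0) (hy : idealClass I = y ^ 2) {n e : ℕ} (he : e ≠ 0)
      (hn : Ideal.absNorm I = n * e ^ 2) : IsSquare (n : ZMod p) :=
    h.isSquare_of_idealClass_eq_sq (by omega) (Int.squarefree_natCast.mpr hd) (by simp) hI hy he hn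
  have hθ : θ ≠ 0 := h.ne_zero (Nat.cast_ne_zero.mpr hd.ne_zero)
  have hθI : idealClass (Ideal.span {θ} * I) = y ^ 2 := by
    rw [idealClass_span_singleton_mul hθ hI, hy]
  have hθI0 := mul_ne_zero (span_singleton_ne_zero hθ) hI
  have hnormθ : Ideal.absNorm (Ideal.span {θ} * I) = p * q * Ideal.absNorm I := by
    rw [map_mul, h.absNorm_eq_of_sq_eq_span (r := p * q) (by
      rw [Ideal.span_singleton_pow, h.sq_eq, Int.cast_natCast])]
  by_contra hndvd
  have heven : 2 ∣ Ideal.absNorm I := not_not.mp fun hodd ↦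
    hndvd (((Nat.prime_two.coprime_iff_not_dvd.mpr hodd).symm).dvd_of_dvd_mul_left hdvd)
  obtain ⟨m, hm⟩ := heven
  rw [hm] at hdvd hnormθ
  rcases eq_of_dvd_mul_of_prime hp hq (Nat.dvd_of_mul_dvd_mul_left two_pos hdvd) with
    rfl | rfl | rfl | rfl
  · exact h2 (by exact_mod_cast hχ hI hy (n := 2) one_ne_zero hm)
  · exact h2q (hχ hθI0 hθI hp.ne_zero (by rw [hnormθ]; ring))
  · exact h2q (hχ hI hy one_ne_zero (by rw [hm]; ring))
  · exact h2 (by exact_mod_cast hχ hθI0 hθI (n := 2) hd.ne_zero (by rw [hnormθ]; ring))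

theorem isSquareUpTo_left_and_right :
    IsSquareUpTo ⊤ (p : 𝓞 K) ∧ IsSquareUpTo ⊤ (q : 𝓞 K) := by
  obtain ⟨ε, r, z, -, hr, hr1, hrd, hz⟩ := h.exists_fundamental_unit_sq_eq
    (by exact_mod_cast Nat.mul_pos hp.pos hq.pos)
    (h.mul_conj_ne_neg_sq_of_prime_mul_prime hp hq hp8 hq4)
  have hsq : IsSquareUpTo ⊤ (r : 𝓞 K) := ⟨ε, trivial, z, hz⟩
  obtain ⟨y, hy⟩ := hsq.exists_span_singleton_sq_eq
  have hy0 : y ≠ 0 := by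
    rintro rfl
    have := h.absNorm_eq_of_sq_eq_span hy
    exact hr.ne_zero (by simpa using this.symm)
  have hnorm := h.absNorm_eq_of_sq_eq_span hy
  have hdvd := h.absNorm_dvd_of_idealClass_eq_sq hp hq hp8 hq4 hqp (span_singleton_ne_zero hy0)
    (y := 1) (by rw [idealClass_span_singleton, one_pow])
    (by rw [hnorm]; exact_mod_cast h.dvd_two_mul_of_sq_eq_span hr hy)
  rw [hnorm] at hdvd
  have hself : IsSquareUpTo ⊤ (p * q : 𝓞 K) := by exact_mod_cast h.isSquareUpTo_self
  have hp0 : (p : 𝓞 K) ≠ 0 := Nat.cast_ne_zero.mpr hp.ne_zero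
  have hq0 : (q : 𝓞 K) ≠ 0 := Nat.cast_ne_zero.mpr hq.ne_zero
  rcases eq_of_dvd_mul_of_prime hp hq hdvd with rfl | rfl | rfl | rfl
  · exact absurd rfl hr1
  · exact ⟨hsq, .of_mul_right hp0 (mul_comm (r : 𝓞 K) q ▸ hself) hsq⟩
  · exact ⟨.of_mul_right hq0 hself hsq, hsq⟩
  · exact absurd rfl hrd

theorem sq_eq_one_of_pow_four_eq_one {y : ClassGroup (𝓞 K)} (hy : y ^ 4 = 1) : y ^ 2 = 1 := by
  obtain ⟨J, r, hJ0, hJy, hr, hJ⟩ := h.exists_sq_eq_span_dvd_two_mul hp hq hp8 hq4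
    (y := y ^ 2) (by rw [← pow_mul, hy])
  have hnorm := h.absNorm_eq_of_sq_eq_span hJ
  have hdvd := h.absNorm_dvd_of_idealClass_eq_sq hp hq hp8 hq4 hqp hJ0 hJy (hnorm ▸ hr)
  rw [hnorm] at hdvd
  obtain ⟨hsp, hsq⟩ := h.isSquareUpTo_left_and_right hp hq hp8 hq4 hqp
  rw [← hJy]
  refine IsSquareUpTo.idealClass_eq_one (U := ⊤) hJ ?_
  rcases eq_of_dvd_mul_of_prime hp hq hdvd with rfl | rfl | rfl | rfl <;> push_cast
  exacts [.of_sq_eq (one_pow 2), hsp, hsq, hsp.mul hsq]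

end PrimeMulPrime

section PrimeMulPrimeMulPrime

variable {p q s : ℕ} (hp : p.Prime) (hq : q.Prime) (hs : s.Prime) (hp4 : p % 4 = 1)
  (hq4 : q % 4 = 3) (hs4 : s % 4 = 3) (hqs : q ≠ s) (h : IsSqrtConj ((p * q * s : ℕ) : ℤ) θ τ)
include hp hq hs hp4 hq4 hs4 hqs h

theorem mul_conj_ne_neg_sq_of_prime_mul_prime_mul_prime (x : 𝓞 K) (n : ℤ) (hn : n ≠ 0) :
    x * τ x ≠ -(n : 𝓞 K) ^ 2 := by
  have hd := squarefree_mul_mul_of_prime hp hq hs (by rintro rfl; omega) (by rintro rfl; omega) hqs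
  exact h.mul_conj_ne_neg_sq hq hq4 (Int.squarefree_natCast.mpr hd)
    (Int.natCast_dvd_natCast.mpr ((dvd_mul_left q p).mul_right s)) x n hn

theorem exists_sq_eq_span_dvd {y : ClassGroup (𝓞 K)} (hy : y ^ 2 = 1) :
    ∃ (J : Ideal (𝓞 K)) (r : ℕ), J ≠ 0 ∧ idealClass J = y ∧ r ∣ p * q * s ∧
      J ^ 2 = Ideal.span {(r : 𝓞 K)} := by
  obtain ⟨J, r, hJ0, hJy, hr, hJ⟩ := h.exists_sq_eq_span_of_sq_eq_one
    (h.mul_conj_ne_neg_sq_of_prime_mul_prime_mul_prime hp hq hs hp4 hq4 hs4 hqs) hy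
  have hd4 : ((p * q * s : ℕ) : ℤ) % 4 = 1 := by
    norm_cast
    simp [Nat.mul_mod, hp4, hq4, hs4]
  exact ⟨J, r, hJ0, hJy, by exact_mod_cast h.dvd_of_sq_eq_span hd4 hr hJ, hJ⟩

theorem exists_fundamental_unit_sq_eq_dvd :
    ∃ (ε : (𝓞 K)ˣ) (r : ℕ) (z : 𝓞 K), Subgroup.closure {-1, ε} = ⊤ ∧ r ∣ p * q * s ∧ r ≠ 1 ∧
      r ≠ p * q * s ∧ z ^ 2 = ε * r := by
  obtain ⟨ε, r, z, hε, hr, hr1, hrd, hz⟩ := h.exists_fundamental_unit_sq_eq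
    (by exact_mod_cast Nat.mul_pos (Nat.mul_pos hp.pos hq.pos) hs.pos)
    (h.mul_conj_ne_neg_sq_of_prime_mul_prime_mul_prime hp hq hs hp4 hq4 hs4 hqs)
  have hd4 : ((p * q * s : ℕ) : ℤ) % 4 = 1 := by
    norm_cast
    simp [Nat.mul_mod, hp4, hq4, hs4]
  have hsq : IsSquareUpTo ⊤ (r : 𝓞 K) := ⟨ε, trivial, z, hz⟩
  obtain ⟨y, hy⟩ := hsq.exists_span_singleton_sq_eq
  exact ⟨ε, r, z, hε, by exact_mod_cast h.dvd_of_sq_eq_span hd4 hr hy, hr1,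
    by exact_mod_cast hrd, hz⟩

theorem eq_one_or_eq_one_or_eq_of_sq_eq_one {y z : ClassGroup (𝓞 K)} (hy : y ^ 2 = 1)
    (hz : z ^ 2 = 1) : y = 1 ∨ z = 1 ∨ y = z := by
  have hself : IsSquareUpTo ⊤ (p * q * s : 𝓞 K) := by exact_mod_cast h.isSquareUpTo_self
  obtain ⟨ε, r, x, -, hr, hr1, hrd, hx⟩ :=
    h.exists_fundamental_unit_sq_eq_dvd hp hq hs hp4 hq4 hs4 hqs
  have hprime := hself.exists_prime_of_dvd_mul_mul hp hq hs hr hr1 hrd ⟨ε, trivial, x, hx⟩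
  obtain ⟨t, ht0, ht⟩ := hself.exists_or_mul_of_dvd_mul_mul hp hq hs hprime
  obtain ⟨J, a, hJ0, rfl, ha, hJ⟩ := h.exists_sq_eq_span_dvd hp hq hs hp4 hq4 hs4 hqs hy
  obtain ⟨J', b, hJ'0, rfl, hb, hJ'⟩ := h.exists_sq_eq_span_dvd hp hq hs hp4 hq4 hs4 hqs hz
  rcases ht a ha with hta | hta
  · exact .inl (hta.idealClass_eq_one hJ)
  rcases ht b hb with htb | htb
  · exact .inr (.inl (htb.idealClass_eq_one hJ'))
  have ht0' : (t : 𝓞 K) ≠ 0 := Nat.cast_ne_zero.mpr ht0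
  have hab : IsSquareUpTo ⊤ (a * b : 𝓞 K) :=
    .of_mul_right (mul_ne_zero ht0' ht0') (by convert hta.mul htb using 1; ring)
      (.of_sq_eq (sq (t : 𝓞 K)))
  exact .inr (.inr (idealClass_eq_of_isSquareUpTo_mul hJ0 hJ'0 hJ hJ' hab))

end PrimeMulPrimeMulPrime

end IsSqrtConj

/-! ### Sums of two squares over the 2-adic integers -/

section Anisotropic

/-- The form `X² + Y² - s (Z² + W²)`, which is the norm form of the quaternion algebra `(-1, s)`,
has no nontrivial zero over `R`. -/
def IsAnisotropicNormForm (R : Type*) [CommRing R] (s : ℤ) : Prop :=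
  ∀ X Y Z W : R, X ^ 2 + Y ^ 2 = s * (Z ^ 2 + W ^ 2) → X = 0 ∧ Y = 0 ∧ Z = 0 ∧ W = 0

namespace IsAnisotropicNormForm

variable {R S : Type*} [CommRing R] [CommRing S] {s : ℤ}

theorem of_injective {f : R →+* S} (hf : Function.Injective f) (h : IsAnisotropicNormForm S s) :
    IsAnisotropicNormForm R s := by
  intro X Y Z W hXYZW
  have := h (f X) (f Y) (f Z) (f W) (by simpa using congrArg f hXYZW)
  simpa only [map_eq_zero_iff f hf] using this

theorem of_forall_exists_eq_mul [IsDomain S] {f : R →+* S} (hf : Function.Injective f) {n : S}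
    (hn : n ≠ 0) (hfn : ∀ x, ∃ r, f r = n * x) (h : IsAnisotropicNormForm R s) :
    IsAnisotropicNormForm S s := by
  intro X Y Z W hXYZW
  obtain ⟨x, hx⟩ := hfn X
  obtain ⟨y, hy⟩ := hfn Y
  obtain ⟨z, hz⟩ := hfn Z
  obtain ⟨w, hw⟩ := hfn W
  obtain ⟨rfl, rfl, rfl, rfl⟩ := h x y z w <| hf <| by
    simp only [map_add, map_mul, map_pow, map_intCast, hx, hy, hz, hw]
    linear_combination n ^ 2 * hXYZW
  simp only [map_zero, zero_eq_mul, hn, false_or] at hx hy hz hw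
  exact ⟨hx, hy, hz, hw⟩

end IsAnisotropicNormForm

theorem IsQuadraticConj.mul_conj_ne_neg_mul_conj {A B : Type*} [CommRing A] [IsDomain A]
    [IsIntegrallyClosed A] [CommRing B] [IsDomain B] [IsIntegrallyClosed B] [CharZero B]
    [Algebra A B] [Module.Finite A B] [Module.IsTorsionFree A B] {σ : B ≃ₐ[A] B}
    (hσ : IsQuadraticConj σ) {s : ℤ} (hs : s ≠ 0) {φ : B} (hφ : φ ^ 2 = s) (hσφ : σ φ = -φ)
    (hA : IsAnisotropicNormForm A s) {x : B} (hx : x ≠ 0) (y : B) : y * σ y ≠ -(x * σ x) := by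
  intro hxy
  have hφ0 : φ ≠ 0 := by
    rintro rfl
    exact hs (by simpa using hφ.symm)
  have exists_trace (z : B) : ∃ a b, algebraMap A B a = z + σ z ∧
      algebraMap A B b = φ * (z - σ z) := by
    obtain ⟨b, hb⟩ := hσ.exists_algebraMap_eq (φ * (z - σ z)) <| by
      rw [map_mul, map_sub, hσ.apply_apply, hσφ]
      ring
    obtain ⟨a, ha⟩ := hσ.exists_algebraMap_eq (z + σ z) <| by
      rw [map_add, hσ.apply_apply, add_comm]
    exact ⟨a, b, ha, hb⟩
  obtain ⟨a, b, ha, hb⟩ := exists_trace x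
  obtain ⟨a', b', ha', hb'⟩ := exists_trace y
  obtain ⟨rfl, -, rfl, -⟩ := hA b b' a a' <| FaithfulSMul.algebraMap_injective A B <| by
    simp only [map_add, map_mul, map_pow, map_intCast, ha, hb, ha', hb']
    linear_combination ((x - σ x) ^ 2 + (y - σ y) ^ 2) * hφ - 4 * s * hxy
  rw [map_zero, zero_eq_mul, or_iff_right hφ0] at hb
  rw [map_zero] at ha
  have h2x : 2 * x = 0 := by linear_combination hb - ha
  exact hx ((mul_eq_zero.mp h2x).resolve_left two_ne_zero)

end Anisotropic

section PadicInt

theorem two_dvd_and_toZModPow_three_sq_or (x : ℤ_[2]) :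
    (2 ∣ x ∧ (PadicInt.toZModPow 3 x ^ 2 = 0 ∨ PadicInt.toZModPow 3 x ^ 2 = 4)) ∨
      PadicInt.toZModPow 3 x ^ 2 = 1 := by
  have hmod : ∀ a : ZMod (2 ^ 3), (2 * a) ^ 2 = 0 ∨ (2 * a) ^ 2 = 4 := by decide
  have hunit : ∀ a : (ZMod (2 ^ 3)), IsUnit a → a ^ 2 = 1 := by decide
  by_cases hx : IsUnit x
  · exact .inr (hunit _ (hx.map (PadicInt.toZModPow 3)))
  · rw [PadicInt.not_isUnit_iff, PadicInt.norm_lt_one_iff_dvd, Nat.cast_two] at hx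
    obtain ⟨y, rfl⟩ := hx
    exact .inl ⟨dvd_mul_right 2 y, by simpa only [map_mul, map_ofNat] using hmod _⟩

theorem two_dvd_of_add_sq_eq {s : ℤ} (hs : s % 4 = 3) {X Y Z W : ℤ_[2]}
    (h : X ^ 2 + Y ^ 2 = s * (Z ^ 2 + W ^ 2)) : 2 ∣ X ∧ 2 ∣ Y ∧ 2 ∣ Z ∧ 2 ∣ W := by
  have hmod : ∀ t : ZMod (2 ^ 3), (t = 3 ∨ t = 7) → ∀ a, (a = 0 ∨ a = 4 ∨ a = 1) →
      ∀ b, (b = 0 ∨ b = 4 ∨ b = 1) → ∀ c, (c = 0 ∨ c = 4 ∨ c = 1) →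
      ∀ e, (e = 0 ∨ e = 4 ∨ e = 1) → a + b = t * (c + e) → a ≠ 1 ∧ b ≠ 1 ∧ c ≠ 1 ∧ e ≠ 1 := by
    decide
  have hs8 : (s : ZMod (2 ^ 3)) = 3 ∨ (s : ZMod (2 ^ 3)) = 7 := by
    have : s % 8 = 3 ∨ s % 8 = 7 := by omega
    exact this.imp (fun h ↦ (ZMod.intCast_eq_intCast_iff s 3 8).mpr h)
      (fun h ↦ (ZMod.intCast_eq_intCast_iff s 7 8).mpr h)
  have hsq (x : ℤ_[2]) := two_dvd_and_toZModPow_three_sq_or x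
  have hsq4 (x : ℤ_[2]) : PadicInt.toZModPow 3 x ^ 2 = 0 ∨ PadicInt.toZModPow 3 x ^ 2 = 4 ∨
      PadicInt.toZModPow 3 x ^ 2 = 1 := by
    rw [← or_assoc]
    exact (hsq x).imp_left And.right
  obtain ⟨hX, hY, hZ, hW⟩ := hmod s hs8 _ (hsq4 X) _ (hsq4 Y) _ (hsq4 Z) _ (hsq4 W)
    (by simpa only [map_add, map_mul, map_pow, map_intCast] using congrArg (PadicInt.toZModPow 3) h)
  exact ⟨((hsq X).resolve_right hX).1, ((hsq Y).resolve_right hY).1,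
    ((hsq Z).resolve_right hZ).1, ((hsq W).resolve_right hW).1⟩

theorem isAnisotropicNormForm_padicInt {s : ℤ} (hs : s % 4 = 3) :
    IsAnisotropicNormForm ℤ_[2] s := by
  intro X Y Z W h
  have two_pow_dvd (n : ℕ) : ∀ {X Y Z W : ℤ_[2]}, X ^ 2 + Y ^ 2 = s * (Z ^ 2 + W ^ 2) →
      2 ^ n ∣ X ∧ 2 ^ n ∣ Y ∧ 2 ^ n ∣ Z ∧ 2 ^ n ∣ W := by
    induction n with
    | zero => simp
    | succ n ih =>
      intro X Y Z W h
      obtain ⟨⟨x, rfl⟩, ⟨y, rfl⟩, ⟨z, rfl⟩, ⟨w, rfl⟩⟩ := two_dvd_of_add_sq_eq hs h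
      obtain ⟨hx, hy, hz, hw⟩ := ih (X := x) (Y := y) (Z := z) (W := w) <|
        mul_left_cancel₀ (by norm_num : (4 : ℤ_[2]) ≠ 0) (by linear_combination h)
      simp only [pow_succ']
      exact ⟨mul_dvd_mul_left 2 hx, mul_dvd_mul_left 2 hy, mul_dvd_mul_left 2 hz,
        mul_dvd_mul_left 2 hw⟩
  have eq_zero {x : ℤ_[2]} (hx : ∀ n : ℕ, 2 ^ n ∣ x) : x = 0 := by
    by_contra hx0
    have h2 : ¬ IsUnit (2 : ℤ_[2]) := PadicInt.p_nonunit (p := 2)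
    obtain ⟨n, hn⟩ := FiniteMultiplicity.of_not_isUnit h2 hx0
    exact hn (hx _)
  exact ⟨eq_zero fun n ↦ (two_pow_dvd n h).1, eq_zero fun n ↦ (two_pow_dvd n h).2.1,
    eq_zero fun n ↦ (two_pow_dvd n h).2.2.1, eq_zero fun n ↦ (two_pow_dvd n h).2.2.2⟩

theorem exists_padicInt_mul_self_eq {d : ℤ} (hd : d % 8 = 1) : ∃ ρ : ℤ_[2], ρ * ρ = d := by
  have hnorm : ‖((1 - d : ℤ) : ℤ_[2])‖ ≤ (2 : ℕ) ^ (-(3 : ℕ) : ℤ) :=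
    PadicInt.norm_int_le_pow_iff_dvd.mpr (by norm_num; omega)
  let F : Polynomial ℤ := .X ^ 2 - .C d
  have heval (x : ℤ_[2]) : Polynomial.aeval x F = x ^ 2 - d := by simp [F]
  have hderiv : Polynomial.aeval (1 : ℤ_[2]) F.derivative = 2 := by
    simp [F, map_ofNat]
  obtain ⟨ρ, hρ, -⟩ := hensels_lemma (F := F) (a := (1 : ℤ_[2])) <| by
    have h2 : ‖(2 : ℤ_[2])‖ = 2⁻¹ := by exact_mod_cast PadicInt.norm_p (p := 2)
    rw [hderiv, heval, h2]
    refine lt_of_le_of_lt ?_ (by norm_num : (2 : ℕ) ^ (-(3 : ℕ) : ℤ) < (2⁻¹ : ℝ) ^ 2)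
    simpa using hnorm
  exact ⟨ρ, by rwa [heval, sub_eq_zero, sq] at hρ⟩

end PadicInt

namespace IsSqrtConj

variable {K : Type*} [Field K] [NumberField K] {d : ℤ} {θ : 𝓞 K} {τ : 𝓞 K ≃ₐ[ℤ] 𝓞 K}
  (h : IsSqrtConj d θ τ)
include h

theorem emod_eight_eq_one_of_absNorm_eq_two (hd : d % 4 = 1) {P : Ideal (𝓞 K)}
    (hP : Ideal.absNorm P = 2) : d % 8 = 1 := by
  obtain ⟨w, -, hw⟩ := h.exists_half_add hd
  have hcard : Nat.card (𝓞 K ⧸ P) = 2 := hP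
  have : Finite (𝓞 K ⧸ P) := Nat.finite_of_card_ne_zero (by omega)
  have := Fintype.ofFinite (𝓞 K ⧸ P)
  let f : 𝓞 K →+* ZMod 2 := (ZMod.ringEquivOfPrime _ Nat.prime_two
    (Fintype.card_eq_nat_card.trans hcard)).symm.toRingHom.comp (Ideal.Quotient.mk P)
  have hzero : ∀ a : ZMod 2, a ^ 2 - a = 0 := by decide
  have hdvd : (((d - 1) / 4 : ℤ) : ZMod 2) = 0 := by
    rw [← map_intCast f, ← hw, map_sub, map_pow, hzero]
  rw [ZMod.intCast_zmod_eq_zero_iff_dvd] at hdvd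
  omega

theorem isAnisotropicNormForm (hd : d % 8 = 1) (hd' : ¬ IsSquare d) {s : ℤ} (hs : s % 4 = 3) :
    IsAnisotropicNormForm (𝓞 K) s := by
  have hns : ∀ n : ℤ, d ≠ n * n := fun n hn ↦ hd' ⟨n, hn⟩
  obtain ⟨ρ, hρ⟩ := exists_padicInt_mul_self_eq hd
  have hzsqrtd : IsAnisotropicNormForm (ℤ√d) s :=
    (isAnisotropicNormForm_padicInt hs).of_injective (Zsqrtd.lift_injective ⟨ρ, hρ⟩ hns)
  refine hzsqrtd.of_forall_exists_eq_mul (n := 2 * d) (Zsqrtd.lift_injective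
    ⟨θ, by rw [← sq, h.sq_eq]⟩ hns) ?_ fun x ↦ ?_
  · exact mul_ne_zero two_ne_zero (by rw [Int.cast_ne_zero]; rintro rfl; exact hd' ⟨0, rfl⟩)
  · obtain ⟨t, ht⟩ := h.exists_intCast_eq_add_conj x
    obtain ⟨m, hm⟩ := h.exists_intCast_eq_mul_sub_conj x
    refine ⟨⟨d * t, m⟩, ?_⟩
    rw [Zsqrtd.lift_apply_apply]
    push_cast
    rw [ht, hm, ← h.sq_eq]
    ring

end IsSqrtConj

/-! ### Primes of degree one -/

namespace IsQuadraticConj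

variable {A B : Type*} [CommRing A] [IsDomain A] [IsIntegrallyClosed A] [CommRing B] [IsDomain B]
  [IsIntegrallyClosed B] [Algebra A B] [Module.Finite A B] [Module.IsTorsionFree A B]
  {σ : B ≃ₐ[A] B} {φ : B}

theorem exists_two_mul_mul_eq (hσ : IsQuadraticConj σ) (hσφ : σ φ = -φ) (x : B) :
    ∃ a b, 2 * φ * x = algebraMap A B a * φ + algebraMap A B b := by
  have htrace (y : B) : ∃ a, algebraMap A B a = y + σ y :=
    hσ.exists_algebraMap_eq _ <| by rw [map_add, hσ.apply_apply, add_comm]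
  obtain ⟨a, ha⟩ := htrace x
  obtain ⟨b, hb⟩ := htrace (φ * x)
  refine ⟨a, b, ?_⟩
  rw [ha, hb, map_mul, hσφ]
  ring

theorem map_mem_subfield {R : Type*} [Field R] (hσ : IsQuadraticConj σ) (hσφ : σ φ = -φ)
    {f : B →+* R} {F : Subfield R} (hA : ∀ a, f (algebraMap A B a) ∈ F) (hφ : f φ ∈ F)
    (h0 : f (2 * φ) ≠ 0) (x : B) : f x ∈ F := by
  obtain ⟨a, b, hx⟩ := hσ.exists_two_mul_mul_eq hσφ x
  have h2φ : f (2 * φ) ∈ F := by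
    rw [map_mul, map_ofNat]
    exact F.mul_mem (ofNat_mem F 2) hφ
  rw [← mul_div_cancel_left₀ (f x) h0, ← map_mul, hx, map_add, map_mul]
  exact F.div_mem (F.add_mem (F.mul_mem (hA a) hφ) (hA b)) h2φ

theorem ringHom_ext {R : Type*} [CommRing R] [IsDomain R] (hσ : IsQuadraticConj σ)
    (hσφ : σ φ = -φ) {f g : B →+* R} (hA : ∀ a, f (algebraMap A B a) = g (algebraMap A B a))
    (hφ : f φ = g φ) (h0 : f (2 * φ) ≠ 0) : f = g := by
  ext x
  obtain ⟨a, b, hx⟩ := hσ.exists_two_mul_mul_eq hσφ x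
  have h2φ : f (2 * φ) = g (2 * φ) := by rw [map_mul, map_mul, hφ, map_ofNat, map_ofNat]
  apply mul_left_cancel₀ h0
  rw [← map_mul, h2φ, ← map_mul, hx, map_add, map_add, map_mul, map_mul, hA, hA, hφ]

end IsQuadraticConj

theorem mem_fieldRange_castHom_of_sq_eq {l : ℕ} [Fact l.Prime] {R : Type*} [Field R] [CharP R l]
    {n : ℤ} (hn : IsSquare (n : ZMod l)) {x : R} (hx : x ^ 2 = n) :
    x ∈ (ZMod.castHom dvd_rfl R : ZMod l →+* R).fieldRange := by
  obtain ⟨a, ha⟩ := hn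
  have hsq : x ^ 2 = (ZMod.castHom dvd_rfl R a) ^ 2 := by
    rw [hx, ← map_pow, pow_two, ← ha, map_intCast]
  rcases sq_eq_sq_iff_eq_or_eq_neg.mp hsq with rfl | rfl
  · exact ⟨a, rfl⟩
  · exact ⟨-a, map_neg _ a⟩

theorem exists_absNorm_eq_of_isSquare {K L : Type*} [Field K] [NumberField K] [Field L]
    [NumberField L] [Algebra K L] {d s : ℤ} {θ : 𝓞 K} {τ : 𝓞 K ≃ₐ[ℤ] 𝓞 K}
    {σ : 𝓞 L ≃ₐ[𝓞 K] 𝓞 L} {φ : 𝓞 L} (h : IsSqrtConj d θ τ) (hσ : IsQuadraticConj σ)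
    (hφ : φ ^ 2 = s) (hσφ : σ φ = -φ) {l : ℕ} (hl : l.Prime) (hl2 : l ≠ 2) (hld : ¬ (l : ℤ) ∣ d)
    (hls : ¬ (l : ℤ) ∣ s) (hd : IsSquare (d : ZMod l)) (hs : IsSquare (s : ZMod l)) :
    ∃ P : Ideal (𝓞 L), Ideal.absNorm P = l := by
  have : Fact l.Prime := ⟨hl⟩
  obtain ⟨M, hM, hMl⟩ :=
    Ideal.exists_maximal_ideal_liesOver_of_isIntegral (Ideal.span {(l : ℤ)}) (S := 𝓞 L)
  let _ : Field (𝓞 L ⧸ M) := Ideal.Quotient.field M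
  have hcast (n : ℤ) : (n : 𝓞 L ⧸ M) = 0 ↔ (l : ℤ) ∣ n := by
    rw [← Ideal.mem_span_singleton, Ideal.mem_of_liesOver M, ← Ideal.Quotient.eq_zero_iff_mem,
      eq_intCast, map_intCast]
  have hchar : CharP (𝓞 L ⧸ M) l := (CharP.charP_iff_prime_eq_zero hl).mpr <| by
    exact_mod_cast (hcast l).mpr dvd_rfl
  set f := Ideal.Quotient.mk M
  set F := (ZMod.castHom dvd_rfl (𝓞 L ⧸ M) : ZMod l →+* 𝓞 L ⧸ M).fieldRange
  have hne {x : 𝓞 L} {n : ℤ} (hx : f x ^ 2 = n) (hn : ¬ (l : ℤ) ∣ n) : f (2 * x) ≠ 0 := by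
    rw [map_mul, map_ofNat]
    refine mul_ne_zero ?_ (ne_zero_pow two_ne_zero (hx ▸ (hcast n).not.mpr hn))
    have h2 := (hcast 2).not.mpr fun hdvd ↦
      hl2 ((Nat.prime_dvd_prime_iff_eq hl Nat.prime_two).mp (by exact_mod_cast hdvd))
    exact_mod_cast h2
  have hfφ : f φ ^ 2 = s := by rw [← map_pow, hφ, map_intCast]
  have hfθ : f (algebraMap _ _ θ) ^ 2 = d := by
    rw [← map_pow, ← map_pow, h.sq_eq, map_intCast, map_intCast]
  have hA (a : 𝓞 K) : f (algebraMap _ _ a) ∈ F := by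
    refine h.toIsQuadraticConj.map_mem_subfield h.conj_eq (f := f.comp (algebraMap _ _))
      (fun n ↦ ?_) (mem_fieldRange_castHom_of_sq_eq hd hfθ) ?_ a
    · simp
    · rw [RingHom.comp_apply, map_mul, map_ofNat]
      exact hne hfθ hld
  have hL (x : 𝓞 L) : f x ∈ F :=
    hσ.map_mem_subfield hσφ hA (mem_fieldRange_castHom_of_sq_eq hs hfφ)
      (hne hfφ hls) x
  refine ⟨M, ?_⟩
  rw [Ideal.absNorm_apply, Submodule.cardQuot_apply, ← Nat.card_zmod l]
  exact (Nat.card_eq_of_bijective _ ⟨(ZMod.castHom dvd_rfl (𝓞 L ⧸ M)).injective,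
    fun r ↦ (Ideal.Quotient.mk_surjective r).elim fun x hx ↦ hx ▸ hL x⟩).symm

theorem exists_prime_gt_of_isUnit {m n k : ℕ} [NeZero m] [NeZero n] [NeZero k]
    (hmn : m.Coprime n) (hmk : m.Coprime k) (hnk : n.Coprime k) {a : ZMod m} {b : ZMod n}
    {c : ZMod k} (ha : IsUnit a) (hb : IsUnit b) (hc : IsUnit c) (N : ℕ) :
    ∃ l > N, l.Prime ∧ (l : ZMod m) = a ∧ (l : ZMod n) = b ∧ (l : ZMod k) = c := by
  let e := (ZMod.chineseRemainder (hmk.mul_left hnk)).trans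
    ((ZMod.chineseRemainder hmn).prodCongr (RingEquiv.refl (ZMod k)))
  have hu : IsUnit (e.symm ((a, b), c)) :=
    (Prod.isUnit_iff.mpr ⟨Prod.isUnit_iff.mpr ⟨ha, hb⟩, hc⟩).map e.symm
  obtain ⟨l, hlN, hl, hle⟩ := Nat.forall_exists_prime_gt_and_eq_mod hu N
  have hmap := (map_natCast e l).symm.trans ((congrArg e hle).trans (e.apply_symm_apply _))
  exact ⟨l, hlN, hl, congrArg (·.1.1) hmap, congrArg (·.1.2) hmap, congrArg Prod.snd hmap⟩

theorem isSquare_mul_of_not_isSquare {l : ℕ} [Fact l.Prime] {m n : ℤ}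
    (hm : ¬ IsSquare (m : ZMod l)) (hn : ¬ IsSquare (n : ZMod l)) :
    IsSquare ((m * n : ℤ) : ZMod l) := by
  have hne {x : ZMod l} (hx : ¬ IsSquare x) : x ≠ 0 := fun h0 ↦ hx (h0 ▸ IsSquare.zero)
  rw [← legendreSym.eq_one_iff l (by push_cast; exact mul_ne_zero (hne hm) (hne hn)),
    legendreSym.mul, (legendreSym.eq_neg_one_iff l).mpr hm, (legendreSym.eq_neg_one_iff l).mpr hn]
  norm_num

theorem exists_prime_gt_not_isSquare {p q s : ℕ} (hp : p.Prime) (hq : q.Prime) (hs : s.Prime)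
    (hp2 : p ≠ 2) (hq2 : q ≠ 2) (hs2 : s ≠ 2) (hpq : p ≠ q) (hps : p ≠ s) (hqs : q ≠ s) (N : ℕ) :
    ∃ l > N, l.Prime ∧ ¬ IsSquare (l : ZMod p) ∧ IsSquare (s : ZMod l) ∧
      IsSquare ((p * q : ℕ) : ZMod l) := by
  have := Fact.mk hp
  have := Fact.mk hq
  have := Fact.mk hs
  have hcop {r : ℕ} (hr : r.Prime) (hr2 : r ≠ 2) (hrs : r ≠ s) : r.Coprime (4 * s) :=
    (((Nat.coprime_primes hr Nat.prime_two).mpr hr2).pow_right 2).mul_right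
      ((Nat.coprime_primes hr hs).mpr hrs)
  have hunit {F : Type} [Field F] {x : F} (hx : ¬ IsSquare x) : IsUnit x :=
    isUnit_iff_ne_zero.mpr fun h0 ↦ hx (h0 ▸ IsSquare.zero)
  obtain ⟨a, ha⟩ := FiniteField.exists_nonsquare (F := ZMod p) (by rwa [ZMod.ringChar_zmod_n])
  obtain ⟨b, hb⟩ := FiniteField.exists_nonsquare (F := ZMod q) (by rwa [ZMod.ringChar_zmod_n])
  obtain ⟨l, hlN, hl, rfl, rfl, hl4s⟩ := exists_prime_gt_of_isUnit
    ((Nat.coprime_primes hp hq).mpr hpq) (hcop hp hp2 hps) (hcop hq hq2 hqs) (hunit ha)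
    (hunit hb) isUnit_one N
  have := Fact.mk hl
  have hmod : l ≡ 1 [MOD 4 * s] := (ZMod.natCast_eq_natCast_iff _ _ _).mp (by simpa using hl4s)
  have hl4 : l % 4 = 1 := hmod.of_mul_right s
  have hls : (l : ZMod s) = 1 := by
    exact_mod_cast (ZMod.natCast_eq_natCast_iff _ _ _).mpr (hmod.of_mul_left 4)
  refine ⟨l, hlN, hl, ha, ?_, ?_⟩
  · rw [ZMod.exists_sq_eq_prime_iff_of_mod_four_eq_one hl4 hs2, hls]
    exact IsSquare.one
  · rw [← ZMod.exists_sq_eq_prime_iff_of_mod_four_eq_one hl4 hp2] at ha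
    rw [← ZMod.exists_sq_eq_prime_iff_of_mod_four_eq_one hl4 hq2] at hb
    exact_mod_cast isSquare_mul_of_not_isSquare (m := p) (n := q) (by exact_mod_cast ha)
      (by exact_mod_cast hb)

/-! ### Sylow 2-subgroups of finite abelian groups -/

theorem mem_sylow_iff_exists_pow_eq_one {p : ℕ} {G : Type*} [CommGroup G] (P : Sylow p G) {x : G} :
    x ∈ P ↔ ∃ n : ℕ, x ^ p ^ n = 1 := by
  refine ⟨fun hx ↦ (P.isPGroup' ⟨x, hx⟩).imp fun n hn ↦ by simpa using congrArg Subtype.val hn,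
    fun hx ↦ ?_⟩
  exact CommGroup.primaryComponent.isPGroup.le_sylow_of_normal P
    (CommGroup.mem_primaryComponent.mpr hx)

theorem subsingleton_of_surjective_pow {p : ℕ} [Fact p.Prime] {G : Type*} [Group G] [Finite G]
    (hG : IsPGroup p G) (hsurj : Function.Surjective fun x : G ↦ x ^ p) : Subsingleton G := by
  obtain ⟨n, hn⟩ := IsPGroup.iff_card.mp hG
  refine subsingleton_of_forall_eq 1 fun x ↦ ?_
  obtain ⟨y, rfl⟩ := hsurj.iterate n x
  rw [pow_iterate, ← hn]
  exact pow_card_eq_one'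

theorem index_range_powMonoidHom_le_two {G : Type*} [CommGroup G] [Finite G]
    (h : ∀ y z : G, y ^ 2 = 1 → z ^ 2 = 1 → y = 1 ∨ z = 1 ∨ y = z) :
    (powMonoidHom 2 : G →* G).range.index ≤ 2 := by
  rw [Subgroup.index_range]
  by_contra! hcard
  obtain ⟨a, b, c, ha, hb, hc, hab, hac, hbc⟩ := (Set.two_lt_ncard_iff (Set.toFinite _)).mp hcard
  have := h a b ha hb
  have := h a c ha hc
  have := h b c hb hc
  grind

theorem zpowers_eq_top_of_not_isSquare {G : Type*} [CommGroup G] [Finite G] (hG : IsPGroup 2 G)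
    (h : ∀ y z : G, y ^ 2 = 1 → z ^ 2 = 1 → y = 1 ∨ z = 1 ∨ y = z) {c : G} (hc : ¬ IsSquare c) :
    Subgroup.zpowers c = ⊤ := by
  have hcr : c ∉ (powMonoidHom 2 : G →* G).range := by
    rintro ⟨y, rfl⟩
    exact hc (IsSquare.sq y)
  have hidx : (powMonoidHom 2 : G →* G).range.index = 2 := by
    have h1 : (powMonoidHom 2 : G →* G).range.index ≠ 1 := fun h1 ↦
      hcr (Subgroup.index_eq_one.mp h1 ▸ Subgroup.mem_top c)
    have := Subgroup.index_ne_zero_of_finite (H := (powMonoidHom 2 : G →* G).range)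
    have := index_range_powMonoidHom_le_two h
    omega
  rw [← QuotientGroup.subsingleton_iff]
  refine subsingleton_of_surjective_pow (hG.to_quotient _) fun x ↦ ?_
  obtain ⟨x, rfl⟩ := QuotientGroup.mk_surjective x
  by_cases hx : x ∈ (powMonoidHom 2 : G →* G).range
  · obtain ⟨y, rfl⟩ := hx
    exact ⟨y, rfl⟩
  · obtain ⟨y, hy⟩ : x * c ∈ (powMonoidHom 2 : G →* G).range :=
      (Subgroup.mul_mem_iff_of_index_two hidx).mpr (iff_of_false hx hcr)
    refine ⟨y, ?_⟩
    rw [← QuotientGroup.mk_mul_of_mem x (Subgroup.mem_zpowers c), ← hy]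
    rfl

theorem exists_mem_sylow_two_not_isSquare {G C : Type*} [CommGroup G] [Finite G] [CommGroup C]
    (N : G →* C) {a : G} (ha : ¬ IsSquare (N a)) (P : Sylow 2 G) :
    ∃ b ∈ P, ¬ IsSquare (N b) := by
  obtain ⟨k, m, ⟨t, rfl⟩, hcard⟩ := Nat.exists_eq_two_pow_mul_odd (n := Nat.card G) Nat.card_pos.ne'
  refine ⟨a ^ (2 * t + 1), (mem_sylow_iff_exists_pow_eq_one P).mpr
    ⟨k, by rw [← pow_mul, mul_comm, ← hcard, pow_card_eq_one']⟩, ?_⟩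
  rintro ⟨y, hy⟩
  refine ha ⟨y * (N a ^ t)⁻¹, ?_⟩
  rw [mul_mul_mul_comm, ← hy, map_pow]
  group

section NormExtension

variable {G C : Type*} [CommGroup G] [CommGroup C] {N : G →* C} {j : C →* G} {P : Sylow 2 G}

theorem eq_one_of_mem_sylow_of_map_eq_one (hNj : ∀ y, N (j y) = y ^ 2)
    (hrange : ∀ a ∈ P, ∀ b ∈ P, a ∉ j.range → b ∉ j.range → a * b ∈ j.range)
    (hker : ∀ y, y ^ 2 = 1 → j y = 1) {a₀ : G} (ha₀ : a₀ ∈ P) (hNa₀ : ¬ IsSquare (N a₀)) {a : G}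
    (ha : a ∈ P) (hNa : N a = 1) : a = 1 := by
  have hsq (y : C) : IsSquare (N (j y)) := hNj y ▸ IsSquare.sq y
  have ha₀j : a₀ ∉ j.range := by
    rintro ⟨y, rfl⟩
    exact hNa₀ (hsq y)
  have haj : a ∈ j.range := by
    by_contra haj
    obtain ⟨y, hy⟩ := hrange a ha a₀ ha₀ haj ha₀j
    have hyN := hsq y
    rw [hy, map_mul, hNa, one_mul] at hyN
    exact hNa₀ hyN
  obtain ⟨y, rfl⟩ := haj
  exact hker y (hNj y ▸ hNa)

theorem isCyclic_sylow_two_and_card_eq [Finite G] [Finite C] (hNj : ∀ y, N (j y) = y ^ 2)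
    (hrange : ∀ a ∈ P, ∀ b ∈ P, a ∉ j.range → b ∉ j.range → a * b ∈ j.range)
    (hker : ∀ y, y ^ 2 = 1 → j y = 1)
    (htwo : ∀ y z : C, y ^ 2 = 1 → z ^ 2 = 1 → y = 1 ∨ z = 1 ∨ y = z)
    {a : G} (ha : ¬ IsSquare (N a)) (Q : Sylow 2 C) :
    IsCyclic (P : Subgroup G) ∧ Nat.card (P : Subgroup G) = Nat.card (Q : Subgroup C) := by
  obtain ⟨a₀, ha₀, hNa₀⟩ := exists_mem_sylow_two_not_isSquare N ha P
  have hNQ (a : (P : Subgroup G)) : N a ∈ (Q : Subgroup C) := by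
    obtain ⟨n, hn⟩ := (mem_sylow_iff_exists_pow_eq_one P).mp a.2
    exact (mem_sylow_iff_exists_pow_eq_one Q).mpr ⟨n, by rw [← map_pow, hn, map_one]⟩
  let f : (P : Subgroup G) →* (Q : Subgroup C) :=
    (N.comp (P : Subgroup G).subtype).codRestrict _ hNQ
  have hinj : Function.Injective f := (injective_iff_map_eq_one f).mpr fun a hfa ↦
    Subtype.ext (eq_one_of_mem_sylow_of_map_eq_one hNj hrange hker ha₀ hNa₀ a.2
      (congrArg Subtype.val hfa))
  have hgen : Subgroup.zpowers (f ⟨a₀, ha₀⟩) = ⊤ := by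
    refine zpowers_eq_top_of_not_isSquare Q.isPGroup' (fun y z hy hz ↦ ?_) fun hsq ↦
      hNa₀ (hsq.map (Q : Subgroup C).subtype)
    simpa only [Subtype.ext_iff, Subgroup.coe_one] using
      htwo y z (congrArg Subtype.val hy) (congrArg Subtype.val hz)
  have hsurj : Function.Surjective f := MonoidHom.range_eq_top.mp <| top_le_iff.mp <|
    hgen ▸ Subgroup.zpowers_le.mpr ⟨_, rfl⟩
  have : IsCyclic (Q : Subgroup C) :=
    isCyclic_iff_exists_zpowers_eq_top.mpr ⟨_, hgen⟩
  exact ⟨isCyclic_of_injective f hinj, Nat.card_eq_of_bijective f ⟨hinj, hsurj⟩⟩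

end NormExtension

theorem pow_pow_eq_one_of_pow_pow_eq_one {M : Type*} [Monoid M] {p k : ℕ}
    (h : ∀ y : M, y ^ p ^ (k + 1) = 1 → y ^ p ^ k = 1) {y : M} {n : ℕ} (hy : y ^ p ^ n = 1) :
    y ^ p ^ k = 1 := by
  replace hy : y ^ p ^ (n + k) = 1 := by rw [pow_add, pow_mul, hy, one_pow]
  induction n with
  | zero => rwa [zero_add] at hy
  | succ n ih =>
    refine ih ?_
    rw [pow_add, pow_mul]
    refine h _ ?_
    rwa [← pow_mul, ← pow_add, ← add_assoc, add_right_comm]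

/-! ### Conjugations of biquadratic fields -/

theorem eq_of_squarefree_of_isSquare_mul {a b : ℕ} (ha : Squarefree a) (hb : Squarefree b)
    (hab : IsSquare (a * b)) : a = b := by
  obtain ⟨c, hc⟩ := hab
  obtain ⟨e, rfl⟩ : a ∣ c := (ha.dvd_pow_iff_dvd two_ne_zero).mp ⟨b, by rw [sq, hc]⟩
  obtain rfl : b = a * (e * e) := Nat.eq_of_mul_eq_mul_left ha.ne_zero.bot_lt (by rw [hc]; ring)
  rw [Nat.isUnit_iff.mp (hb e (Dvd.intro_left a rfl)), mul_one, mul_one]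

theorem not_isSquare_natCast_of_squarefree {a : ℕ} (ha : Squarefree a) (ha1 : a ≠ 1) :
    ¬ IsSquare (a : ℤ) := fun h ↦
  ha1 <| eq_of_squarefree_of_isSquare_mul ha squarefree_one <| by
    rwa [mul_one, ← Int.isSquare_natCast_iff]

theorem IsSqrtConj.isSquare_or_isSquare_mul_of_sq_eq {K : Type*} [Field K] [NumberField K] {d : ℤ}
    {θ x : 𝓞 K} {τ : 𝓞 K ≃ₐ[ℤ] 𝓞 K} (h : IsSqrtConj d θ τ) {m : ℤ} (hx : x ^ 2 = m) :
    IsSquare m ∨ IsSquare (d * m) := by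
  have hsq : τ x ^ 2 = x ^ 2 := by rw [← map_pow, hx, map_intCast]
  rcases sq_eq_sq_iff_eq_or_eq_neg.mp hsq with hτ | hτ
  · obtain ⟨n, rfl⟩ := h.exists_algebraMap_eq x hτ
    rw [eq_intCast] at hx
    exact .inl ⟨n, by rw [← sq]; exact_mod_cast hx.symm⟩
  · obtain ⟨n, hn⟩ := h.exists_algebraMap_eq (θ * x) (by rw [map_mul, h.conj_eq, hτ, neg_mul_neg])
    refine .inr ⟨n, ?_⟩
    rw [eq_intCast] at hn
    have hdm : ((d * m : ℤ) : 𝓞 K) = ((n * n : ℤ) : 𝓞 K) := by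
      push_cast
      rw [hn, ← hx, ← h.sq_eq]
      ring
    exact_mod_cast hdm

/-- The norm `u ↦ u * σ u` of a conjugation `σ`, as an endomorphism of the unit group. -/
def conjNorm {A B : Type*} [CommRing A] [CommRing B] [Algebra A B] (σ : B ≃ₐ[A] B) : Bˣ →* Bˣ :=
  MonoidHom.id Bˣ * Units.map σ

section ConjNorm

variable {A B : Type*} [CommRing A] [CommRing B] [Algebra A B] {σ : B ≃ₐ[A] B}

theorem val_conjNorm_apply (u : Bˣ) : (conjNorm σ u : B) = u * σ u := rfl

theorem mem_ker_conjNorm_iff {u : Bˣ} : u ∈ (conjNorm σ).ker ↔ (u : B) * σ u = 1 := by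
  rw [MonoidHom.mem_ker, Units.ext_iff, val_conjNorm_apply, Units.val_one]

theorem exists_conjNorm_eq_or_eq_neg_of_closure_eq_top {ε : Aˣ}
    (hε : Subgroup.closure {-1, ε} = ⊤) {f : Aˣ →* Bˣ} (hf : f (-1) = -1)
    (h : ∃ w, conjNorm σ w = f ε ∨ conjNorm σ w = -f ε) (u : Aˣ) :
    ∃ w, conjNorm σ w = f u ∨ conjNorm σ w = -f u := by
  induction (hε ▸ Subgroup.mem_top u : u ∈ Subgroup.closure {-1, ε})
    using Subgroup.closure_induction with
  | mem x hx =>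
    rcases hx with rfl | rfl
    · exact ⟨1, .inr (by rw [map_one, hf, neg_neg])⟩
    · exact h
  | one => exact ⟨1, .inl (by rw [map_one, map_one])⟩
  | mul x y _ _ hx hy =>
    obtain ⟨w, hw⟩ := hx
    obtain ⟨v, hv⟩ := hy
    refine ⟨w * v, ?_⟩
    rcases hw with hw | hw <;> rcases hv with hv | hv <;> simp [hw, hv]
  | inv x _ hx =>
    obtain ⟨w, hw⟩ := hx
    refine ⟨w⁻¹, ?_⟩
    rcases hw with hw | hw <;> simp [hw]

theorem IsSquareUpTo.exists_conjNorm_eq_or_eq_neg [IsDomain B] [IsIntegrallyClosed B]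
    {x δ : A} {ε : Aˣ} (hx : algebraMap A B x ≠ 0)
    (h : IsSquareUpTo (conjNorm σ).ker (algebraMap A B x)) (hδ : δ ^ 2 = ε * x) :
    ∃ w, conjNorm σ w = Units.map (algebraMap A B : A →* B) ε ∨
      conjNorm σ w = -Units.map (algebraMap A B : A →* B) ε := by
  obtain ⟨u, hu, z, hz⟩ := h
  set X := algebraMap A B x
  set E := Units.map (algebraMap A B : A →* B) ε
  have hδ' : algebraMap A B δ ^ 2 = E * X := by rw [← map_pow, hδ, map_mul]; rfl
  have hsq : (algebraMap A B δ * z) ^ 2 = X ^ 2 * (E * u) := by rw [mul_pow, hδ', hz]; ring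
  obtain ⟨η, hη⟩ := (IsIntegrallyClosed.pow_dvd_pow_iff two_ne_zero).mp ⟨_, hsq⟩
  have hηsq : η ^ 2 = (E * u : Bˣ) := by
    rw [hη, mul_pow] at hsq
    exact mul_left_cancel₀ (pow_ne_zero 2 hx) hsq
  have hunit : IsUnit η := (isUnit_pow_iff two_ne_zero).mp (hηsq ▸ Units.isUnit _)
  lift η to Bˣ using hunit
  refine ⟨η, ?_⟩
  have hEσ : conjNorm σ E = E ^ 2 := by
    ext
    rw [val_conjNorm_apply, sq, Units.val_mul]
    exact congrArg (_ * ·) (σ.commutes _)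
  have hN : conjNorm σ η ^ 2 = E ^ 2 := by
    rw [← map_pow, show η ^ 2 = E * u from Units.ext (by exact_mod_cast hηsq), map_mul,
      MonoidHom.mem_ker.mp hu, mul_one, hEσ]
  simpa only [Units.ext_iff, Units.val_neg] using
    sq_eq_sq_iff_eq_or_eq_neg.mp (congrArg Units.val hN)

end ConjNorm

section Tower

variable {K L : Type*} [Field K] [NumberField K] [Field L] [Algebra K L]
  {θ : 𝓞 K} {τ : 𝓞 K ≃ₐ[ℤ] 𝓞 K}

theorem IsSqrtConj.ringHom_ext {R : Type*} [CommRing R] [IsDomain R] {d : ℤ}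
    (h : IsSqrtConj d θ τ) (hd : d ≠ 0) {f g : 𝓞 K →+* R} (hf : Function.Injective f)
    (hθ : f θ = g θ) : f = g := by
  refine h.toIsQuadraticConj.ringHom_ext h.conj_eq (fun n ↦ ?_) hθ ?_
  · rw [eq_intCast, map_intCast, map_intCast]
  · exact (map_ne_zero_iff f hf).mpr (mul_ne_zero two_ne_zero (h.ne_zero hd))

theorem IsSqrtConj.conj_algebraMap {A : Type*} [CommRing A] [Algebra A (𝓞 L)]
    {σ : 𝓞 L ≃ₐ[A] 𝓞 L} {d : ℤ} (h : IsSqrtConj d θ τ) (hd : d ≠ 0)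
    (hσθ : σ (algebraMap _ _ θ) = -algebraMap _ _ θ) (x : 𝓞 K) :
    σ (algebraMap _ _ x) = algebraMap _ _ (τ x) := by
  refine RingHom.congr_fun (h.ringHom_ext hd (f := (σ : 𝓞 L →+* 𝓞 L).comp (algebraMap _ _))
    (g := (algebraMap _ _).comp (τ : 𝓞 K →+* 𝓞 K)) ?_ ?_) x
  · exact σ.injective.comp (FaithfulSMul.algebraMap_injective (𝓞 K) (𝓞 L))
  · simp [hσθ, h.conj_eq]

theorem IsSqrtConj.map_units_le_ker_conjNorm {A : Type*} [CommRing A] [Algebra A (𝓞 L)]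
    {σ : 𝓞 L ≃ₐ[A] 𝓞 L} {d : ℤ} (h : IsSqrtConj d θ τ) (hd : d ≠ 0)
    (hσθ : σ (algebraMap _ _ θ) = -algebraMap _ _ θ)
    (hneg : ∀ (x : 𝓞 K) (n : ℤ), n ≠ 0 → x * τ x ≠ -(n : 𝓞 K) ^ 2) {U : Subgroup (𝓞 K)ˣ} :
    U.map (Units.map (algebraMap (𝓞 K) (𝓞 L))) ≤ (conjNorm σ).ker := by
  rintro _ ⟨u, -, rfl⟩
  rw [mem_ker_conjNorm_iff]
  change algebraMap _ _ (u : 𝓞 K) * σ (algebraMap _ _ (u : 𝓞 K)) = 1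
  rw [h.conj_algebraMap hd hσθ, ← map_mul, h.unit_mul_conj_eq_one hneg, map_one]

variable [NumberField L] {σ : 𝓞 L ≃ₐ[𝓞 K] 𝓞 L} {χ : 𝓞 L}

theorem IsQuadraticConj.conj_eq_neg_of_sq_eq (hσ : IsQuadraticConj σ) {d m : ℕ}
    (h : IsSqrtConj (d : ℤ) θ τ) (hd : Squarefree d) (hm : Squarefree m) (hm1 : m ≠ 1)
    (hdm : d ≠ m) (hχ : χ ^ 2 = m) : σ χ = -χ := by
  have hsq : σ χ ^ 2 = χ ^ 2 := by rw [← map_pow, hχ, map_natCast]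
  refine (sq_eq_sq_iff_eq_or_eq_neg.mp hsq).resolve_left fun hfix ↦ ?_
  obtain ⟨x, rfl⟩ := hσ.exists_algebraMap_eq χ hfix
  have hx : x ^ 2 = ((m : ℤ) : 𝓞 K) := by
    apply FaithfulSMul.algebraMap_injective (𝓞 K) (𝓞 L)
    rw [map_pow, hχ, Int.cast_natCast, map_natCast]
  rcases h.isSquare_or_isSquare_mul_of_sq_eq hx with hsq | hsq
  · exact not_isSquare_natCast_of_squarefree hm hm1 hsq
  · exact hdm (eq_of_squarefree_of_isSquare_mul hd hm (Int.isSquare_natCast_iff.mp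
      (by exact_mod_cast hsq)))

theorem IsQuadraticConj.ringHom_ext_of_isSqrtConj {R : Type*} [CommRing R] [IsDomain R]
    {d : ℤ} (hσ : IsQuadraticConj σ) (h : IsSqrtConj d θ τ) (hd : d ≠ 0)
    (hσχ : σ χ = -χ) (hχ0 : χ ≠ 0) {f g : 𝓞 L →+* R} (hf : Function.Injective f)
    (hθ : f (algebraMap _ _ θ) = g (algebraMap _ _ θ)) (hχ : f χ = g χ) : f = g :=
  hσ.ringHom_ext hσχ
    (RingHom.congr_fun (h.ringHom_ext hd (f := f.comp (algebraMap _ _))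
      (g := g.comp (algebraMap _ _)) (hf.comp (FaithfulSMul.algebraMap_injective _ _)) hθ))
    hχ ((map_ne_zero_iff f hf).mpr (mul_ne_zero two_ne_zero hχ0))

theorem IsQuadraticConj.apply_apply_eq_of_isSqrtConj {A₁ A₂ : Type*} [CommRing A₁] [CommRing A₂]
    [Algebra A₁ (𝓞 L)] [Algebra A₂ (𝓞 L)] {σ₁ : 𝓞 L ≃ₐ[A₁] 𝓞 L} {σ₂ : 𝓞 L ≃ₐ[A₂] 𝓞 L} {d : ℤ}
    (hσ : IsQuadraticConj σ) (h : IsSqrtConj d θ τ) (hd : d ≠ 0) (hσχ : σ χ = -χ) (hχ0 : χ ≠ 0)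
    (h₁θ : σ₁ (algebraMap _ _ θ) = -algebraMap _ _ θ)
    (h₂θ : σ₂ (algebraMap _ _ θ) = -algebraMap _ _ θ) (h₁χ : σ₁ χ = χ) (h₂χ : σ₂ χ = -χ)
    (x : 𝓞 L) : σ₁ (σ₂ x) = σ x := by
  refine RingHom.congr_fun (hσ.ringHom_ext_of_isSqrtConj h hd hσχ hχ0
    (f := (σ₁ : 𝓞 L →+* 𝓞 L).comp (σ₂ : 𝓞 L →+* 𝓞 L)) (g := (σ : 𝓞 L →+* 𝓞 L))
    (σ₁.injective.comp σ₂.injective) ?_ ?_) x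
  · simp [h₁θ, h₂θ]
  · simp [h₁χ, h₂χ, hσχ]

end Tower

theorem exists_isQuadraticConj_biquadratic {a b : ℕ} (hab : Squarefree (a * b)) (ha1 : a ≠ 1)
    (hb1 : b ≠ 1) {K F F' L : Type*} [Field K] [NumberField K] [Field F] [NumberField F] [Field F']
    [NumberField F'] [Field L] [NumberField L] [Algebra K L] [Algebra F L] [Algebra F' L]
    {θ : 𝓞 K} {τ : 𝓞 K ≃ₐ[ℤ] 𝓞 K} {φ : 𝓞 F} {τ₁ : 𝓞 F ≃ₐ[ℤ] 𝓞 F} {ψ : 𝓞 F'}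
    {τ₂ : 𝓞 F' ≃ₐ[ℤ] 𝓞 F'} (h : IsSqrtConj ((a * b : ℕ) : ℤ) θ τ) (h₁ : IsSqrtConj (b : ℤ) φ τ₁)
    (h₂ : IsSqrtConj (a : ℤ) ψ τ₂) (hK : Module.finrank K L = 2) (hF : Module.finrank F L = 2)
    (hF' : Module.finrank F' L = 2) :
    ∃ (σ : 𝓞 L ≃ₐ[𝓞 K] 𝓞 L) (σ₁ : 𝓞 L ≃ₐ[𝓞 F] 𝓞 L) (σ₂ : 𝓞 L ≃ₐ[𝓞 F'] 𝓞 L),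
      IsQuadraticConj σ ∧ IsQuadraticConj σ₁ ∧ IsQuadraticConj σ₂ ∧
      σ (algebraMap _ _ φ) = -algebraMap _ _ φ ∧ σ (algebraMap _ _ ψ) = -algebraMap _ _ ψ ∧
      ∀ x, σ₁ (σ₂ x) = σ x := by
  obtain ⟨σ, hσ⟩ := exists_isQuadraticConj (𝓞 K) K L (𝓞 L) hK
  obtain ⟨σ₁, hσ₁⟩ := exists_isQuadraticConj (𝓞 F) F L (𝓞 L) hF
  obtain ⟨σ₂, hσ₂⟩ := exists_isQuadraticConj (𝓞 F') F' L (𝓞 L) hF'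
  have ha := hab.of_mul_left
  have hb := hab.of_mul_right
  have hab1 : a * b ≠ 1 := fun h ↦ ha1 (Nat.eq_one_of_mul_eq_one_right h)
  have habne : a ≠ b := by
    rintro rfl
    exact ha1 (Nat.isUnit_iff.mp (hab a dvd_rfl))
  have haab : a * b ≠ a := (mul_eq_left₀ ha.ne_zero).not.mpr hb1
  have hbab : a * b ≠ b := (mul_eq_right₀ hb.ne_zero).not.mpr ha1
  have hΦ : algebraMap (𝓞 F) (𝓞 L) φ ^ 2 = b := by
    rw [← map_pow, h₁.sq_eq, Int.cast_natCast, map_natCast]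
  have hΨ : algebraMap (𝓞 F') (𝓞 L) ψ ^ 2 = a := by
    rw [← map_pow, h₂.sq_eq, Int.cast_natCast, map_natCast]
  have hΘ : algebraMap (𝓞 K) (𝓞 L) θ ^ 2 = (a * b : ℕ) := by
    rw [← map_pow, h.sq_eq, Int.cast_natCast, map_natCast]
  have hφ0 : φ ≠ 0 := h₁.ne_zero (Nat.cast_ne_zero.mpr hb.ne_zero)
  have hσΦ := hσ.conj_eq_neg_of_sq_eq h hab hb hb1 hbab hΦ
  refine ⟨σ, σ₁, σ₂, hσ, hσ₁, hσ₂, hσΦ, hσ.conj_eq_neg_of_sq_eq h hab ha ha1 haab hΨ,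
    hσ.apply_apply_eq_of_isSqrtConj h (Nat.cast_ne_zero.mpr hab.ne_zero) hσΦ
      ((map_ne_zero_iff _ (FaithfulSMul.algebraMap_injective _ _)).mpr hφ0)
      (hσ₁.conj_eq_neg_of_sq_eq h₁ hb hab hab1 hbab.symm hΘ)
      (hσ₂.conj_eq_neg_of_sq_eq h₂ ha hab hab1 haab.symm hΘ) (σ₁.commutes φ)
      (hσ₂.conj_eq_neg_of_sq_eq h₂ ha hb hb1 habne hΦ)⟩

/-! ### The 2-class group of a biquadratic field -/

theorem extendedHom_idealClass_eq_one_of_isSquareUpTo {A B : Type*} [CommRing A]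
    [IsDedekindDomain A] [CommRing B] [IsDedekindDomain B] [Algebra A B] [Module.IsTorsionFree A B]
    {U : Subgroup Bˣ} {J : Ideal A} (hJ0 : J ≠ 0) {r : ℕ} (hJ : J ^ 2 = Ideal.span {(r : A)})
    (hr : IsSquareUpTo U (r : B)) : ClassGroup.extendedHom A B (idealClass J) = 1 := by
  rw [extendedHom_idealClass B hJ0]
  refine hr.idealClass_eq_one ?_
  rw [← Ideal.map_pow, hJ, Ideal.map_span, Set.image_singleton, map_natCast]

theorem IsQuadraticConj.idealClass_map_eq_inv {A B : Type*} [CommRing A] [IsDedekindDomain A]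
    [CommRing B] [IsDedekindDomain B] [Algebra A B] [Module.Finite A B] [Module.IsTorsionFree A B]
    {σ : B ≃ₐ[A] B} (hσ : IsQuadraticConj σ) {n : ℕ}
    (hA : ∀ y : ClassGroup A, y ^ n = 1 → ClassGroup.extendedHom A B y = 1) {I : Ideal B}
    (hI0 : I ≠ 0) (hI : idealClass I ^ n = 1) : idealClass (I.map σ) = (idealClass I)⁻¹ := by
  refine eq_inv_of_mul_eq_one_right ?_
  rw [hσ.idealClass_mul_idealClass_map hI0]
  exact hA _ (by rw [← map_pow, hI, map_one])

theorem idealClass_map_eq_of_forall_apply_apply_eq {A A₁ A₂ B : Type*} [CommRing A] [CommRing A₁]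
    [IsDedekindDomain A₁] [CommRing A₂] [IsDedekindDomain A₂] [CommRing B] [IsDedekindDomain B]
    [Algebra A B] [Algebra A₁ B] [Module.Finite A₁ B] [Module.IsTorsionFree A₁ B] [Algebra A₂ B]
    [Module.Finite A₂ B] [Module.IsTorsionFree A₂ B] {σ : B ≃ₐ[A] B} {σ₁ : B ≃ₐ[A₁] B}
    {σ₂ : B ≃ₐ[A₂] B} (h₁ : IsQuadraticConj σ₁) (h₂ : IsQuadraticConj σ₂)
    (hcomp : ∀ x, σ₁ (σ₂ x) = σ x) {n : ℕ}
    (hA₁ : ∀ y : ClassGroup A₁, y ^ n = 1 → ClassGroup.extendedHom A₁ B y = 1)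
    (hA₂ : ∀ y : ClassGroup A₂, y ^ n = 1 → ClassGroup.extendedHom A₂ B y = 1) {I : Ideal B}
    (hI0 : I ≠ 0) (hI : idealClass I ^ n = 1) : idealClass (I.map σ) = idealClass I := by
  have hσ : (σ₁ : B →+* B).comp (σ₂ : B →+* B) = σ := RingHom.ext hcomp
  have hmap : I.map σ = (I.map σ₂).map σ₁ :=
    (congrArg (I.map ·) hσ.symm).trans (Ideal.map_map _ _).symm
  have hI₂ : idealClass (I.map σ₂) = (idealClass I)⁻¹ := h₂.idealClass_map_eq_inv hA₂ hI0 hI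
  have hI₂0 : I.map σ₂ ≠ 0 := (Ideal.map_eq_bot_iff_of_injective σ₂.injective).not.mpr hI0
  rw [hmap, h₁.idealClass_map_eq_inv hA₁ hI₂0 (by rw [hI₂, inv_pow, hI, inv_one]), hI₂, inv_inv]

section Biquadratic

variable {p q s : ℕ} {F F' L : Type*} [Field F] [NumberField F] [Field F'] [NumberField F']
  [Field L] [Algebra F L] [Algebra F' L]
  {φ : 𝓞 F} {τ : 𝓞 F ≃ₐ[ℤ] 𝓞 F} {ψ : 𝓞 F'} {τ' : 𝓞 F' ≃ₐ[ℤ] 𝓞 F'}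

theorem isSquareUpTo_of_dvd_two_mul (hp : p.Prime) (hq : q.Prime) (hs : s.Prime)
    (hp8 : p % 8 = 5) (hq4 : q % 4 = 3) (hs4 : s % 4 = 3) (hqp : IsSquare (q : ZMod p))
    (h : IsSqrtConj (s : ℤ) φ τ) (h' : IsSqrtConj ((p * q : ℕ) : ℤ) ψ τ') {r : ℕ}
    (hr : r ∣ 2 * (p * q)) : IsSquareUpTo ⊤ (r : 𝓞 L) := by
  have hs2 := (h.isSquareUpTo_two hs hs4).map (algebraMap (𝓞 F) (𝓞 L)) (V := ⊤) le_top
  obtain ⟨hsp, hsq⟩ := h'.isSquareUpTo_left_and_right hp hq hp8 hq4 hqp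
  have hsp' := hsp.map (algebraMap (𝓞 F') (𝓞 L)) (V := ⊤) le_top
  have hsq' := hsq.map (algebraMap (𝓞 F') (𝓞 L)) (V := ⊤) le_top
  rw [map_natCast] at hsp' hsq'
  rw [map_ofNat] at hs2
  rw [← mul_assoc] at hr
  refine of_dvd_mul_mul_of_prime (P := fun r ↦ IsSquareUpTo ⊤ (r : 𝓞 L))
    (.of_sq_eq (z := 1) (by simp)) (fun a b ha hb ↦ ?_) Nat.prime_two hp hq
    (by exact_mod_cast hs2) hsp' hsq' hr
  simpa only [Nat.cast_mul] using ha.mul hb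

theorem isSquareUpTo_ker_conjNorm_of_dvd (hp : p.Prime) (hq : q.Prime) (hs : s.Prime)
    (hp8 : p % 8 = 5) (hq4 : q % 4 = 3) (hqp : IsSquare (q : ZMod p))
    (h' : IsSqrtConj ((p * q : ℕ) : ℤ) ψ τ') {A : Type*} [CommRing A] [Algebra A (𝓞 L)]
    {σ : 𝓞 L ≃ₐ[A] 𝓞 L} (hσψ : σ (algebraMap _ _ ψ) = -algebraMap _ _ ψ) {χ : 𝓞 L}
    (hχ : χ ^ 2 = s) {r : ℕ} (hr : r ∣ p * q * s) :
    IsSquareUpTo (conjNorm σ).ker (r : 𝓞 L) := by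
  have hpq0 : ((p * q : ℕ) : ℤ) ≠ 0 := by exact_mod_cast mul_ne_zero hp.ne_zero hq.ne_zero
  have hmap := h'.map_units_le_ker_conjNorm hpq0 hσψ (U := ⊤)
    (h'.mul_conj_ne_neg_sq_of_prime_mul_prime hp hq hp8 hq4)
  obtain ⟨hsp, hsq⟩ := h'.isSquareUpTo_left_and_right hp hq hp8 hq4 hqp
  have hsp' := hsp.map _ hmap
  have hsq' := hsq.map _ hmap
  rw [map_natCast] at hsp' hsq'
  refine of_dvd_mul_mul_of_prime (P := fun r ↦ IsSquareUpTo (conjNorm σ).ker (r : 𝓞 L))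
    (.of_sq_eq (z := 1) (by simp)) (fun a b ha hb ↦ ?_) hp hq hs hsp' hsq' (.of_sq_eq hχ) hr
  simpa only [Nat.cast_mul] using ha.mul hb

variable [NumberField L]

theorem IsSqrtConj.extendedHom_eq_one_of_pow_two_pow_eq_one (hp : p.Prime) (hq : q.Prime)
    (hs : s.Prime) (hp8 : p % 8 = 5) (hq4 : q % 4 = 3) (hs4 : s % 4 = 3)
    (hqp : IsSquare (q : ZMod p)) (h : IsSqrtConj (s : ℤ) φ τ)
    (h' : IsSqrtConj ((p * q : ℕ) : ℤ) ψ τ') {n : ℕ} {y : ClassGroup (𝓞 F')}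
    (hy : y ^ 2 ^ n = 1) : ClassGroup.extendedHom (𝓞 F') (𝓞 L) y = 1 := by
  have hy2 : y ^ 2 ^ 1 = 1 := pow_pow_eq_one_of_pow_pow_eq_one
    (fun y hy ↦ h'.sq_eq_one_of_pow_four_eq_one hp hq hp8 hq4 hqp hy) hy
  obtain ⟨J, r, hJ0, rfl, hr, hJ⟩ := h'.exists_sq_eq_span_dvd_two_mul hp hq hp8 hq4 hy2
  exact extendedHom_idealClass_eq_one_of_isSquareUpTo hJ0 hJ
    (isSquareUpTo_of_dvd_two_mul hp hq hs hp8 hq4 hs4 hqp h h' hr)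

theorem idealClass_map_eq_of_pow_two_pow_eq_one (hp : p.Prime) (hq : q.Prime) (hs : s.Prime)
    (hp8 : p % 8 = 5) (hq4 : q % 4 = 3) (hs4 : s % 4 = 3) (hqp : IsSquare (q : ZMod p))
    (h : IsSqrtConj (s : ℤ) φ τ) (h' : IsSqrtConj ((p * q : ℕ) : ℤ) ψ τ')
    {A : Type*} [CommRing A] [Algebra A (𝓞 L)] {σ : 𝓞 L ≃ₐ[A] 𝓞 L} {σ₁ : 𝓞 L ≃ₐ[𝓞 F] 𝓞 L}
    {σ₂ : 𝓞 L ≃ₐ[𝓞 F'] 𝓞 L} (h₁ : IsQuadraticConj σ₁) (h₂ : IsQuadraticConj σ₂)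
    (hcomp : ∀ x, σ₁ (σ₂ x) = σ x) {I : Ideal (𝓞 L)} (hI0 : I ≠ 0) {n : ℕ}
    (hI : idealClass I ^ 2 ^ n = 1) : idealClass (I.map σ) = idealClass I := by
  refine idealClass_map_eq_of_forall_apply_apply_eq h₁ h₂ hcomp (fun y hy ↦ ?_)
    (fun y hy ↦ h.extendedHom_eq_one_of_pow_two_pow_eq_one hp hq hs hp8 hq4 hs4 hqp h' hy) hI0 hI
  have hy1 : y ^ 2 ^ 0 = 1 := pow_pow_eq_one_of_pow_pow_eq_one
    (fun y hy ↦ by simpa using h.eq_one_of_sq_eq_one hs hs4 (by simpa using hy)) hy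
  rw [pow_zero, pow_one] at hy1
  rw [hy1, map_one]

variable {k : Type*} [Field k] [NumberField k] [Algebra k L] {θ : 𝓞 k} {τₖ : 𝓞 k ≃ₐ[ℤ] 𝓞 k}
  {σ : 𝓞 L ≃ₐ[𝓞 k] 𝓞 L}

theorem IsSqrtConj.extendedHom_eq_one_of_sq_eq_one (hp : p.Prime) (hq : q.Prime) (hs : s.Prime)
    (hp4 : p % 4 = 1) (hq4 : q % 4 = 3) (hs4 : s % 4 = 3) (hqs : q ≠ s)
    (h : IsSqrtConj ((p * q * s : ℕ) : ℤ) θ τₖ) {U : Subgroup (𝓞 L)ˣ}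
    (hU : ∀ r : ℕ, r ∣ p * q * s → IsSquareUpTo U (r : 𝓞 L)) {y : ClassGroup (𝓞 k)}
    (hy : y ^ 2 = 1) : ClassGroup.extendedHom (𝓞 k) (𝓞 L) y = 1 := by
  obtain ⟨J, r, hJ0, rfl, hr, hJ⟩ := h.exists_sq_eq_span_dvd hp hq hs hp4 hq4 hs4 hqs hy
  exact extendedHom_idealClass_eq_one_of_isSquareUpTo hJ0 hJ (hU r hr)

theorem IsSqrtConj.exists_mul_conj_eq_or_eq_neg (hp : p.Prime) (hq : q.Prime) (hs : s.Prime)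
    (hp4 : p % 4 = 1) (hq4 : q % 4 = 3) (hs4 : s % 4 = 3) (hqs : q ≠ s)
    (h : IsSqrtConj ((p * q * s : ℕ) : ℤ) θ τₖ)
    (hU : ∀ r : ℕ, r ∣ p * q * s → IsSquareUpTo (conjNorm σ).ker (r : 𝓞 L)) (u : (𝓞 k)ˣ) :
    ∃ w : (𝓞 L)ˣ, (w * σ w : 𝓞 L) = algebraMap _ _ (u : 𝓞 k) ∨
      (w * σ w : 𝓞 L) = -algebraMap _ _ (u : 𝓞 k) := by
  obtain ⟨ε, r, z, hε, hr, -, -, hz⟩ :=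
    h.exists_fundamental_unit_sq_eq_dvd hp hq hs hp4 hq4 hs4 hqs
  have hr0 : r ≠ 0 :=
    ne_zero_of_dvd_ne_zero (mul_ne_zero (mul_ne_zero hp.ne_zero hq.ne_zero) hs.ne_zero) hr
  have hUr : IsSquareUpTo (conjNorm σ).ker (algebraMap (𝓞 k) (𝓞 L) r) := by
    rw [map_natCast]
    exact hU r hr
  have hεnorm := hUr.exists_conjNorm_eq_or_eq_neg
    (by rw [map_natCast]; exact Nat.cast_ne_zero.mpr hr0) hz
  obtain ⟨w, hw⟩ := exists_conjNorm_eq_or_eq_neg_of_closure_eq_top hε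
    (Units.ext (by simp)) hεnorm u
  exact ⟨w, hw.imp (congrArg Units.val) (congrArg Units.val)⟩

theorem IsSqrtConj.mul_mem_range_extendedHom (hp : p.Prime) (hq : q.Prime) (hs : s.Prime)
    (hp4 : p % 4 = 1) (hq4 : q % 4 = 3) (hs4 : s % 4 = 3) (hqs : q ≠ s)
    (h : IsSqrtConj ((p * q * s : ℕ) : ℤ) θ τₖ) (hσ : IsQuadraticConj σ) {Φ Ψ : 𝓞 L}
    (hΦ : Φ ^ 2 = s) (hΨ : Ψ ^ 2 = (p * q : ℕ)) (hσΦ : σ Φ = -Φ) (hσΨ : σ Ψ = -Ψ)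
    {V : Subgroup (𝓞 L)ˣ} (htwo : IsSquareUpTo V (2 : 𝓞 L))
    (hU : ∀ r : ℕ, r ∣ p * q * s → IsSquareUpTo (conjNorm σ).ker (r : 𝓞 L))
    {I I' : Ideal (𝓞 L)} (hI : I ≠ 0) (hI' : I' ≠ 0) (hσI : idealClass (I.map σ) = idealClass I)
    (hσI' : idealClass (I'.map σ) = idealClass I')
    (hIr : idealClass I ∉ (ClassGroup.extendedHom (𝓞 k) (𝓞 L)).range)
    (hIr' : idealClass I' ∉ (ClassGroup.extendedHom (𝓞 k) (𝓞 L)).range) :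
    idealClass I * idealClass I' ∈ (ClassGroup.extendedHom (𝓞 k) (𝓞 L)).range := by
  have hpq : p ≠ q := by rintro rfl; omega
  have hps : p ≠ s := by rintro rfl; omega
  have hsqf := squarefree_mul_mul_of_prime hp hq hs hpq hps hqs
  have hcop : IsCoprime (s : 𝓞 k) ((p * q : ℕ) : 𝓞 k) :=
    (Nat.coprime_of_squarefree_mul hsqf).symm.cast
  have hΦ0 : Φ ≠ 0 := by
    rintro rfl
    exact hs.ne_zero (by exact_mod_cast hΦ.symm.trans (zero_pow two_ne_zero))
  have hd4 : ((p * q * s : ℕ) : ℤ) % 4 = 1 := by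
    have : p * q * s % 4 = 1 := by simp [Nat.mul_mod, hp4, hq4, hs4]
    omega
  refine hσ.mul_mem_range_extendedHom h.finrank_eq_two (fun C J hC hJ ↦ ?_) htwo hΦ0 hσΦ
    (h.exists_mul_conj_eq_or_eq_neg hp hq hs hp4 hq4 hs4 hqs hU) ?_ hI hI' hσI hσI' hIr hIr'
  · exact hσ.dvd_span_two_of_sq_eq_map hcop (by rw [hΦ, map_natCast]) (by rw [hΨ, map_natCast])
      hσΦ hσΨ hC hJ
  · rintro ⟨P, hP⟩ x y hx -
    have hd8 := h.emod_eight_eq_one_of_absNorm_eq_two hd4 hP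
    refine hσ.mul_conj_ne_neg_mul_conj (s := s) (by exact_mod_cast hs.ne_zero)
      (by rw [hΦ, Int.cast_natCast]) hσΦ (h.isAnisotropicNormForm hd8 ?_ (by omega)) hx y
    refine not_isSquare_natCast_of_squarefree hsqf fun h1 ↦ hs.one_lt.ne' ?_
    exact Nat.eq_one_of_mul_eq_one_left h1

theorem IsSqrtConj.exists_normClass_not_isSquare (hp : p.Prime) (hq : q.Prime) (hs : s.Prime)
    (hp4 : p % 4 = 1) (hq4 : q % 4 = 3) (hs4 : s % 4 = 3) (hqs : q ≠ s)
    (h : IsSqrtConj ((p * q * s : ℕ) : ℤ) θ τₖ) (hσ : IsQuadraticConj σ) {Φ : 𝓞 L}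
    (hΦ : Φ ^ 2 = s) (hσΦ : σ Φ = -Φ) :
    ∃ a : ClassGroup (𝓞 L), ¬ IsSquare (normClass (𝓞 k) a) := by
  have : Fact p.Prime := ⟨hp⟩
  have hpq : p ≠ q := by rintro rfl; omega
  have hps : p ≠ s := by rintro rfl; omega
  have hsqf := squarefree_mul_mul_of_prime hp hq hs hpq hps hqs
  obtain ⟨l, hlN, hl, hlp, hsl, hpql⟩ := exists_prime_gt_not_isSquare hp hq hs (by omega)
    (by omega) (by omega) hpq hps hqs (2 * (p * q * s))
  have hndvd {m : ℕ} (hm : m ∣ 2 * (p * q * s)) : ¬ (l : ℤ) ∣ m := fun hlm ↦ by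
    have hpos : 0 < 2 * (p * q * s) :=
      mul_pos two_pos (mul_pos (mul_pos hp.pos hq.pos) hs.pos)
    exact hlN.not_ge (Nat.le_of_dvd hpos ((Int.natCast_dvd_natCast.mp hlm).trans hm))
  obtain ⟨I, hI⟩ := exists_absNorm_eq_of_isSquare h hσ (s := s) (by rw [hΦ, Int.cast_natCast]) hσΦ
    hl (fun hl2 ↦ hndvd (dvd_mul_right 2 _) (by rw [hl2])) (hndvd (dvd_mul_left _ _))
    (hndvd ((dvd_mul_left _ _).mul_left _))
    (by rw [Nat.cast_mul (p * q)]; exact_mod_cast hpql.mul hsl) (by exact_mod_cast hsl)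
  have hI0 : I ≠ 0 := by
    rintro rfl
    exact hl.ne_zero (by rw [← hI, Submodule.zero_eq_bot, Ideal.absNorm_bot])
  refine ⟨idealClass I, ?_⟩
  rintro ⟨y, hy⟩
  rw [normClass_idealClass _ hI0, ← sq] at hy
  refine hlp (h.isSquare_of_idealClass_eq_sq hp4 (Int.squarefree_natCast.mpr hsqf)
    (Int.natCast_dvd_natCast.mpr ((dvd_mul_right p q).mul_right s))
    (Ideal.relNorm_eq_bot_iff.not.mpr hI0) hy one_ne_zero ?_)
  rw [Ideal.absNorm_relNorm, hI, one_pow, mul_one]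

theorem isCyclic_sylow_two_classGroup_and_card_eq (hp : p.Prime) (hq : q.Prime) (hs : s.Prime)
    (hp8 : p % 8 = 5) (hq4 : q % 4 = 3) (hs4 : s % 4 = 3) (hqs : q ≠ s)
    (hqp : IsSquare (q : ZMod p)) (hk : IsSqrtConj ((p * q * s : ℕ) : ℤ) θ τₖ)
    (hF : IsSqrtConj (s : ℤ) φ τ) (hF' : IsSqrtConj ((p * q : ℕ) : ℤ) ψ τ')
    (hkL : Module.finrank k L = 2) (hFL : Module.finrank F L = 2)
    (hF'L : Module.finrank F' L = 2) (P : Sylow 2 (ClassGroup (𝓞 L)))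
    (Q : Sylow 2 (ClassGroup (𝓞 k))) :
    IsCyclic (P : Subgroup (ClassGroup (𝓞 L))) ∧
      Nat.card (P : Subgroup (ClassGroup (𝓞 L))) = Nat.card (Q : Subgroup (ClassGroup (𝓞 k))) := by
  have hd := squarefree_mul_mul_of_prime hp hq hs (by rintro rfl; omega) (by rintro rfl; omega) hqs
  have hpq1 : p * q ≠ 1 := fun h ↦ hp.one_lt.ne' (Nat.eq_one_of_mul_eq_one_right h)
  obtain ⟨σ, σ₁, σ₂, hσ, hσ₁, hσ₂, hσΦ, hσΨ, hcomp⟩ :=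
    exists_isQuadraticConj_biquadratic hd hpq1 hs.one_lt.ne' hk hF hF' hkL hFL hF'L
  have hΦ : algebraMap (𝓞 F) (𝓞 L) φ ^ 2 = s := by
    rw [← map_pow, hF.sq_eq, Int.cast_natCast, map_natCast]
  have hΨ : algebraMap (𝓞 F') (𝓞 L) ψ ^ 2 = (p * q : ℕ) := by
    rw [← map_pow, hF'.sq_eq, Int.cast_natCast, map_natCast]
  have htwo := (hF.isSquareUpTo_two hs hs4).map (algebraMap (𝓞 F) (𝓞 L)) (V := ⊤) le_top
  rw [map_ofNat] at htwo
  have hU (r : ℕ) (hr : r ∣ p * q * s) : IsSquareUpTo (conjNorm σ).ker (r : 𝓞 L) :=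
    isSquareUpTo_ker_conjNorm_of_dvd hp hq hs hp8 hq4 hqp hF' hσΨ hΦ hr
  have hfix {I : Ideal (𝓞 L)} (hI0 : I ≠ 0) (hIP : idealClass I ∈ P) :
      idealClass (I.map σ) = idealClass I := by
    obtain ⟨n, hn⟩ := (mem_sylow_iff_exists_pow_eq_one P).mp hIP
    exact idealClass_map_eq_of_pow_two_pow_eq_one hp hq hs hp8 hq4 hs4 hqp hF hF' hσ₁ hσ₂ hcomp
      hI0 hn
  obtain ⟨a, ha⟩ := hk.exists_normClass_not_isSquare hp hq hs (by omega) hq4 hs4 hqs hσ hΦ hσΦ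
  refine isCyclic_sylow_two_and_card_eq hσ.normClass_extendedHom (fun b hb c hc hbr hcr ↦ ?_)
    (fun y hy ↦ hk.extendedHom_eq_one_of_sq_eq_one hp hq hs (by omega) hq4 hs4 hqs hU hy)
    (fun y z hy hz ↦
      hk.eq_one_or_eq_one_or_eq_of_sq_eq_one hp hq hs (by omega) hq4 hs4 hqs hy hz) ha Q
  obtain ⟨I, hI, rfl⟩ := exists_idealClass_eq b
  obtain ⟨J, hJ, rfl⟩ := exists_idealClass_eq c
  exact hk.mul_mem_range_extendedHom hp hq hs (by omega) hq4 hs4 hqs hσ hΦ hΨ hσΦ hσΨ htwo hU hI hJ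
    (hfix hI hb) (hfix hJ hc) hbr hcr

end Biquadratic

/-! ### The fields `ℚ(√d)` and `ℚ(√a, √b)` -/

theorem ofReal_sqrt_natCast_sq (d : ℕ) : ((Real.sqrt d : ℝ) : ℂ) ^ 2 = d := by
  rw [← Complex.ofReal_pow, Real.sq_sqrt (Nat.cast_nonneg d), Complex.ofReal_natCast]

theorem isIntegral_ofReal_sqrt_natCast (R : Type*) [CommRing R] [Algebra R ℂ] (d : ℕ) :
    IsIntegral R ((Real.sqrt d : ℝ) : ℂ) :=
  .of_pow two_pos <| by
    rw [ofReal_sqrt_natCast_sq, ← map_natCast (algebraMap R ℂ)]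
    exact isIntegral_algebraMap

theorem exists_ringOfIntegers_sq_eq_natCast {K : IntermediateField ℚ ℂ} {d : ℕ}
    (h : ((Real.sqrt d : ℝ) : ℂ) ∈ K) : ∃ x : 𝓞 K, x ^ 2 = d := by
  refine ⟨⟨⟨_, h⟩, ?_⟩, RingOfIntegers.coe_injective (Subtype.coe_injective ?_)⟩
  · rw [mem_integralClosure_iff]
    exact (isIntegral_algebraMap_iff (algebraMap K ℂ).injective).mp
      (isIntegral_ofReal_sqrt_natCast ℤ d)
  · exact ofReal_sqrt_natCast_sq d

theorem ofReal_sqrt_mem_quadF (d : ℕ) : ((Real.sqrt d : ℝ) : ℂ) ∈ quadF d :=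
  IntermediateField.mem_adjoin_simple_self ℚ _

theorem quadF_le_iff {d : ℕ} {K : IntermediateField ℚ ℂ} :
    quadF d ≤ K ↔ ((Real.sqrt d : ℝ) : ℂ) ∈ K :=
  IntermediateField.adjoin_simple_le_iff

theorem quadF_sup_quadF (a b : ℕ) : quadF a ⊔ quadF b = biquadF a b :=
  (IntermediateField.adjoin_union ℚ).symm

theorem quadF_mul_le_biquadF (a b : ℕ) : quadF (a * b) ≤ biquadF a b := by
  rw [quadF_le_iff, Nat.cast_mul, Real.sqrt_mul (Nat.cast_nonneg a), Complex.ofReal_mul,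
    ← quadF_sup_quadF]
  exact mul_mem (le_sup_left (a := quadF a) (ofReal_sqrt_mem_quadF a))
    (le_sup_right (b := quadF b) (ofReal_sqrt_mem_quadF b))

instance finiteDimensional_quadF (d : ℕ) : FiniteDimensional ℚ (quadF d) :=
  IntermediateField.adjoin.finiteDimensional (isIntegral_ofReal_sqrt_natCast ℚ d)

instance finiteDimensional_biquadF (a b : ℕ) : FiniteDimensional ℚ (biquadF a b) :=
  quadF_sup_quadF a b ▸ inferInstance

instance numberField_quadF (d : ℕ) : NumberField (quadF d) where
  to_charZero := inferInstance
  to_finiteDimensional := by convert finiteDimensional_quadF d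

instance numberField_biquadF (a b : ℕ) : NumberField (biquadF a b) where
  to_charZero := inferInstance
  to_finiteDimensional := by convert finiteDimensional_biquadF a b

theorem finrank_quadF {d : ℕ} (hd : ¬ IsSquare (d : ℤ)) : Module.finrank ℚ (quadF d) = 2 := by
  have hirr : Irreducible (Polynomial.X ^ 2 - Polynomial.C (d : ℚ)) :=
    X_pow_sub_C_irreducible_of_prime Nat.prime_two fun x hx ↦ hd <|
      Rat.isSquare_intCast_iff.mp ⟨x, by rw [← sq, hx, Int.cast_natCast]⟩
  have hroot : Polynomial.aeval ((Real.sqrt d : ℝ) : ℂ)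
      (Polynomial.X ^ 2 - Polynomial.C (d : ℚ)) = 0 := by
    simp [ofReal_sqrt_natCast_sq]
  rw [quadF, IntermediateField.adjoin.finrank (isIntegral_ofReal_sqrt_natCast ℚ d),
    ← minpoly.eq_of_irreducible_of_monic hirr hroot (Polynomial.monic_X_pow_sub_C _ two_ne_zero),
    Polynomial.natDegree_X_pow_sub_C]

theorem exists_isSqrtConj_quadF {d : ℕ} (hd : ¬ IsSquare (d : ℤ)) :
    ∃ (θ : 𝓞 (quadF d)) (τ : 𝓞 (quadF d) ≃ₐ[ℤ] 𝓞 (quadF d)), IsSqrtConj (d : ℤ) θ τ := by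
  obtain ⟨θ, hθ⟩ := exists_ringOfIntegers_sq_eq_natCast (ofReal_sqrt_mem_quadF d)
  exact ⟨θ, exists_isSqrtConj (by convert finrank_quadF hd)
    (by rw [hθ, Int.cast_natCast]) hd⟩

theorem finrank_biquadF {a b : ℕ} (hab : Squarefree (a * b)) (ha1 : a ≠ 1) (hb1 : b ≠ 1) :
    Module.finrank ℚ (biquadF a b) = 4 := by
  have ha := not_isSquare_natCast_of_squarefree hab.of_mul_left ha1
  have hb := not_isSquare_natCast_of_squarefree hab.of_mul_right hb1
  have hle : quadF a ≤ biquadF a b := quadF_sup_quadF a b ▸ le_sup_left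
  have hfour : Module.finrank ℚ (biquadF a b) ≤ 4 := by
    rw [← quadF_sup_quadF]
    simpa only [finrank_quadF ha, finrank_quadF hb] using
      IntermediateField.finrank_sup_le (quadF a) (quadF b)
  have htwo : 2 ∣ Module.finrank ℚ (biquadF a b) :=
    finrank_quadF ha ▸ IntermediateField.finrank_dvd_of_le_right hle
  have hne : Module.finrank ℚ (biquadF a b) ≠ 2 := fun h ↦ by
    have hbmem : ((Real.sqrt b : ℝ) : ℂ) ∈ quadF a := by
      rw [IntermediateField.eq_of_le_of_finrank_eq hle (by rw [h, finrank_quadF ha]),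
        ← quadF_le_iff, ← quadF_sup_quadF]
      exact le_sup_right
    obtain ⟨x, hx⟩ := exists_ringOfIntegers_sq_eq_natCast hbmem
    obtain ⟨θ, τ, hτ⟩ := exists_isSqrtConj_quadF ha
    rcases hτ.isSquare_or_isSquare_mul_of_sq_eq (m := b) (by rw [hx, Int.cast_natCast])
      with hsq | hsq
    · exact hb hsq
    · refine not_isSquare_natCast_of_squarefree hab (fun h1 ↦ ha1 ?_) (by exact_mod_cast hsq)
      exact Nat.eq_one_of_mul_eq_one_right h1
  have hpos : 0 < Module.finrank ℚ (biquadF a b) := Module.finrank_pos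
  omega

theorem finrank_eq_two_of_finrank_rat_eq {K L : Type*} [Field K] [Field L]
    [Algebra ℚ K] [Algebra ℚ L] [Algebra K L] (hK : Module.finrank ℚ K = 2)
    (hL : Module.finrank ℚ L = 4) : Module.finrank K L = 2 := by
  have hmul := Module.finrank_mul_finrank ℚ K L
  rw [hK, hL] at hmul
  omega

theorem isCyclic_sylow_two_classGroup_biquadF_and_card_eq {p q s : ℕ} (hp : p.Prime)
    (hq : q.Prime) (hs : s.Prime) (hp8 : p % 8 = 5) (hq4 : q % 4 = 3) (hs4 : s % 4 = 3)
    (hqs : q ≠ s) (hpq : IsSquare (p : ZMod q)) (P : Sylow 2 (ClassGroup (𝓞 (biquadF (p * q) s))))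
    (Q : Sylow 2 (ClassGroup (𝓞 (quadF (p * q * s))))) :
    IsCyclic (P : Subgroup (ClassGroup (𝓞 (biquadF (p * q) s)))) ∧
      Nat.card (P : Subgroup (ClassGroup (𝓞 (biquadF (p * q) s)))) =
        Nat.card (Q : Subgroup (ClassGroup (𝓞 (quadF (p * q * s))))) := by
  have : Fact p.Prime := ⟨hp⟩
  have : Fact q.Prime := ⟨hq⟩
  have hqp : IsSquare (q : ZMod p) :=
    (ZMod.exists_sq_eq_prime_iff_of_mod_four_eq_one (by omega) (by omega)).mpr hpq
  have hsqf := squarefree_mul_mul_of_prime hp hq hs (by rintro rfl; omega)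
    (by rintro rfl; omega) hqs
  have hs1 := hs.one_lt.ne'
  have hpq1 : p * q ≠ 1 := fun h ↦ hp.one_lt.ne' (Nat.eq_one_of_mul_eq_one_right h)
  have hpqs1 : p * q * s ≠ 1 := fun h ↦ hpq1 (Nat.eq_one_of_mul_eq_one_right h)
  have hk := not_isSquare_natCast_of_squarefree hsqf hpqs1
  have hF := not_isSquare_natCast_of_squarefree hsqf.of_mul_right hs1
  have hF' := not_isSquare_natCast_of_squarefree hsqf.of_mul_left hpq1
  obtain ⟨θ, τ, hθ⟩ := exists_isSqrtConj_quadF hk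
  obtain ⟨φ, τ₁, hφ⟩ := exists_isSqrtConj_quadF hF
  obtain ⟨ψ, τ₂, hψ⟩ := exists_isSqrtConj_quadF hF'
  let _ := (IntermediateField.inclusion (quadF_mul_le_biquadF (p * q) s)).toRingHom.toAlgebra
  let _ := (IntermediateField.inclusion
    (quadF_sup_quadF (p * q) s ▸ le_sup_right : quadF s ≤ _)).toRingHom.toAlgebra
  let _ := (IntermediateField.inclusion
    (quadF_sup_quadF (p * q) s ▸ le_sup_left : quadF (p * q) ≤ _)).toRingHom.toAlgebra
  have hL := finrank_biquadF hsqf hpq1 hs1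
  exact isCyclic_sylow_two_classGroup_and_card_eq hp hq hs hp8 hq4 hs4 hqs hqp hθ hφ hψ
    (finrank_eq_two_of_finrank_rat_eq (finrank_quadF hk) hL)
    (finrank_eq_two_of_finrank_rat_eq (finrank_quadF hF) hL)
    (finrank_eq_two_of_finrank_rat_eq (finrank_quadF hF') hL) P Q

theorem two_class_groups_cyclic_of_order_h2pqs_general
    (p q s : ℕ) (hp : p.Prime) (hq : q.Prime) (hs : s.Prime) (hqs : q ≠ s)
    (hp8 : p % 8 = 5) (hq4 : q % 4 = 3) (hs4 : s % 4 = 3)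
    (hQRq : IsSquare (p : ZMod q)) (hQRs : IsSquare (p : ZMod s)) :
    ∀ Q : Sylow 2 (ClassGroup (𝓞 (quadF (p * q * s)))),
    (∀ P : Sylow 2 (ClassGroup (𝓞 (biquadF (p * q) s))),
      IsCyclic (P : Subgroup (ClassGroup (𝓞 (biquadF (p * q) s)))) ∧
      Nat.card (P : Subgroup (ClassGroup (𝓞 (biquadF (p * q) s)))) =
        Nat.card (Q : Subgroup (ClassGroup (𝓞 (quadF (p * q * s)))))) ∧
    (∀ P : Sylow 2 (ClassGroup (𝓞 (biquadF (p * s) q))),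
      IsCyclic (P : Subgroup (ClassGroup (𝓞 (biquadF (p * s) q)))) ∧
      Nat.card (P : Subgroup (ClassGroup (𝓞 (biquadF (p * s) q)))) =
        Nat.card (Q : Subgroup (ClassGroup (𝓞 (quadF (p * q * s)))))) := by
  have hswap := fun P Q ↦ isCyclic_sylow_two_classGroup_biquadF_and_card_eq hp hs hq hp8 hs4 hq4
    hqs.symm hQRs P Q
  rw [mul_right_comm p s q] at hswap
  exact fun Q ↦ ⟨fun P ↦ isCyclic_sylow_two_classGroup_biquadF_and_card_eq hp hq hs hp8 hq4 hs4 hqs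
    hQRq P Q, fun P ↦ hswap P Q⟩

theorem two_class_groups_cyclic_of_order_h2pqs
    (p q s : ℕ) (hp : p.Prime) (hq : q.Prime) (hs : s.Prime)
    (hpq : p ≠ q) (hps : p ≠ s) (hqs : q ≠ s)
    (hp8 : p % 8 = 5) (hq8 : q % 8 = 3) (hs4 : s % 4 = 3)
    (hQRq : IsSquare (p : ZMod q)) (hQRs : IsSquare (p : ZMod s)) :
    ∀ Q : Sylow 2 (ClassGroup (𝓞 (quadF (p * q * s)))),
    (∀ P : Sylow 2 (ClassGroup (𝓞 (biquadF (p * q) s))),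
      IsCyclic (P : Subgroup (ClassGroup (𝓞 (biquadF (p * q) s)))) ∧
      Nat.card (P : Subgroup (ClassGroup (𝓞 (biquadF (p * q) s)))) =
        Nat.card (Q : Subgroup (ClassGroup (𝓞 (quadF (p * q * s)))))) ∧
    (∀ P : Sylow 2 (ClassGroup (𝓞 (biquadF (p * s) q))),
      IsCyclic (P : Subgroup (ClassGroup (𝓞 (biquadF (p * s) q)))) ∧
      Nat.card (P : Subgroup (ClassGroup (𝓞 (biquadF (p * s) q)))) =
        Nat.card (Q : Subgroup (ClassGroup (𝓞 (quadF (p * q * s)))))) :=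
  two_class_groups_cyclic_of_order_h2pqs_general p q s hp hq hs hqs hp8 (by omega) hs4 hQRq hQRs
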